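/- arXiv:math/9207205 — 7 statements merged into one kernel-verified Lean document; each statement's English description precedes it below -/
import Mathlib

section
/- Let (A,B) be a disjoint (θ,θ) pair which is nice. Then (A,B) is a gap, i.e., it cannot be split: there is no set c ⊆ ω such that a_ξ \ c is finite for every ξ < θ and c ∩ b_ξ is finite for every ξ < θ. -/
open Cardinal Set

/-- `a(x) = ⋂ ξ ∈ x, a ξ`  (so `a(∅) = ω`). -/
def inters (a : Ordinal.{0} → Set ℕ) (x : Set Ordinal) : Set ℕ := ⋂ ξ ∈ x, a ξ

/-- `(A,B)`, given by `a ξ` and `b ξ` for `ξ < θ`, is a `(θ,θ)` pair: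
`a ξ ∩ b η` is finite for all `ξ, η < θ`. -/
def IsPair (θ : Cardinal.{0}) (a b : Ordinal.{0} → Set ℕ) : Prop :=
  ∀ ξ < θ.ord, ∀ η < θ.ord, (a ξ ∩ b η).Finite

/-- `x` is a family of θ-many pairwise disjoint finite subsets of `θ`. -/
def DisjFinFam (θ : Cardinal.{0}) (x : Ordinal.{0} → Set Ordinal.{0}) : Prop :=
  (∀ i < θ.ord, (x i).Finite ∧ x i ⊆ Set.Iio θ.ord) ∧
  ∀ i < θ.ord, ∀ j < θ.ord, i ≠ j → Disjoint (x i) (x j)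

/-- The pair `(A,B)` is nice: for every family of θ-many pairwise disjoint finite
subsets of `θ` there are `i, j < θ` with `a(x_i) ∩ b(x_j) ≠ ∅`. -/
def IsNice (θ : Cardinal.{0}) (a b : Ordinal.{0} → Set ℕ) : Prop :=
  ∀ x : Ordinal.{0} → Set Ordinal.{0}, DisjFinFam θ x →
    ∃ i < θ.ord, ∃ j < θ.ord, (inters a (x i) ∩ inters b (x j)).Nonempty

/-!
If `c` split the pair, each `ξ < θ` would have a trace `(a ξ \ c, c ∩ b ξ)` consisting of two
finite subsets of `ω`. There are only countably many such traces and `cof θ` is uncountable, so some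
`θ`-many `ξ` share the same one. For `ξ, η` with equal traces, `a ξ ∩ b η` is empty: outside `c` it
lies in `a η ∩ b η`, and inside `c` it lies in `a ξ ∩ b ξ`. This contradicts niceness for the
singletons of these `θ`-many indices.
-/

universe u v

theorem disjoint_of_sdiff_le_of_inf_le {α : Type*} [GeneralizedBooleanAlgebra α]
    {a a' b b' c : α} (hab : Disjoint a b) (hab' : Disjoint a' b') (ha : a \ c ≤ a')
    (hb : c ⊓ b' ≤ b) : Disjoint a b' := by
  have inside : Disjoint (a ⊓ c) b' := disjoint_assoc.2 (hab.mono_right hb)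
  have outside : Disjoint (a \ c) b' := hab'.mono_left ha
  simpa only [sup_inf_sdiff] using inside.sup_left outside

theorem exists_le_mk_inter_preimage_singleton {α : Type u} {β : Type v} (f : α → β) {s : Set α}
    {κ : Cardinal.{u}} (hs : κ ≤ #s) (hκ : ℵ₀ ≤ κ)
    (hf : lift.{u} #(f '' s) < lift.{v} κ.ord.cof) :
    ∃ y, κ ≤ #(s ∩ f ⁻¹' {y} : Set α) := by
  have hshrink : #(Shrink.{u} (f '' s)) < κ.ord.cof := by
    rwa [← lift_lt.{u, v}, lift_mk_shrink']
  obtain ⟨y, t, hts, hκt, hty⟩ := infinite_pigeonhole_set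
    (fun x : s ↦ equivShrink (f '' s) ⟨f x, mem_image_of_mem f x.2⟩) κ hs hκ hshrink
  refine ⟨(equivShrink (f '' s)).symm y, hκt.trans (mk_le_mk_of_subset fun x hx ↦ ⟨hts hx, ?_⟩)⟩
  exact congrArg Subtype.val ((Equiv.eq_symm_apply _).2 (hty hx))

theorem exists_lift_le_mk_Iio_ord_inter_preimage_singleton {θ : Cardinal.{u}} {β : Type v}
    (f : Ordinal.{u} → β) (hθ : ℵ₀ < θ.ord.cof) (hf : (f '' Iio θ.ord).Countable) :
    ∃ y, lift.{u + 1} θ ≤ #(Iio θ.ord ∩ f ⁻¹' {y} : Set Ordinal.{u}) := by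
  apply exists_le_mk_inter_preimage_singleton
  · rw [mk_Iio_ordinal, card_ord]
  · exact aleph0_le_lift.2 (hθ.le.trans (Ordinal.cof_ord_le θ))
  · calc lift.{u + 1} #(f '' Iio θ.ord) ≤ ℵ₀ := lift_le_aleph0.2 hf.le_aleph0
      _ < lift.{v} (lift.{u + 1} θ).ord.cof := by
        rwa [← lift_ord, ← Ordinal.lift_cof, aleph0_lt_lift, aleph0_lt_lift]

theorem inters_singleton (a : Ordinal.{0} → Set ℕ) (ξ : Ordinal.{0}) : inters a {ξ} = a ξ :=
  biInter_singleton ξ a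

theorem disjFinFam_singleton {θ : Cardinal.{0}} {y : Ordinal.{0} → Ordinal.{0}}
    (hy : MapsTo y (Iio θ.ord) (Iio θ.ord)) (hinj : InjOn y (Iio θ.ord)) :
    DisjFinFam θ fun i ↦ {y i} :=
  ⟨fun _ hi ↦ ⟨finite_singleton _, singleton_subset_iff.2 (hy hi)⟩,
    fun _ hi _ hj hij ↦ disjoint_singleton.2 (hinj.ne hi hj hij)⟩

namespace IsNice

variable {θ : Cardinal.{0}} {a b : Ordinal.{0} → Set ℕ}

theorem ord_pos (h : IsNice θ a b) : 0 < θ.ord := by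
  obtain ⟨i, hi, -⟩ := h (fun _ ↦ ∅) (by simp [DisjFinFam])
  exact pos_of_gt hi

theorem exists_nonempty_inter (h : IsNice θ a b) {S : Set Ordinal.{0}} (hS : S ⊆ Iio θ.ord)
    (hcard : lift.{1} θ ≤ #S) : ∃ ξ ∈ S, ∃ η ∈ S, (a ξ ∩ b η).Nonempty := by
  obtain ⟨g⟩ : Nonempty (Iio θ.ord ↪ S) := by
    rwa [← Cardinal.le_def, mk_Iio_ordinal, card_ord]
  have : Nonempty S := ⟨g ⟨0, h.ord_pos⟩⟩
  obtain ⟨y, hy⟩ : ∃ y : Ordinal.{0} → S, InjOn y (Iio θ.ord) :=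
    exists_injOn_iff_injective.2 ⟨g, g.injective⟩
  obtain ⟨i, -, j, -, hij⟩ := h _ <|
    disjFinFam_singleton (fun i _ ↦ hS (y i).2) (Subtype.val_injective.comp_injOn hy)
  rw [inters_singleton, inters_singleton] at hij
  exact ⟨y i, (y i).2, y j, (y j).2, hij⟩

end IsNice

theorem statement0_general (θ : Cardinal.{0}) (a b : Ordinal.{0} → Set ℕ)
    (hκ : ℵ₀ < θ.ord.cof) (hdisj : ∀ ξ < θ.ord, a ξ ∩ b ξ = ∅) (hnice : IsNice θ a b) :
    ¬ ∃ c : Set ℕ, ∀ ξ < θ.ord, (a ξ \ c).Finite ∧ (c ∩ b ξ).Finite := by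
  rintro ⟨c, hc⟩
  let trace (ξ : Ordinal.{0}) : Set ℕ × Set ℕ := (a ξ \ c, c ∩ b ξ)
  have htrace : (trace '' Iio θ.ord).Countable :=
    (Countable.ofPred_finite.prod Countable.ofPred_finite).mono <| by
      rintro _ ⟨ξ, hξ, rfl⟩
      exact hc ξ hξ
  obtain ⟨p, hp⟩ := exists_lift_le_mk_Iio_ord_inter_preimage_singleton trace hκ htrace
  obtain ⟨ξ, ⟨hξ, hξp⟩, η, ⟨hη, hηp⟩, hne⟩ := hnice.exists_nonempty_inter inter_subset_left hp
  obtain ⟨ha, hb⟩ : a ξ \ c = a η \ c ∧ c ∩ b ξ = c ∩ b η :=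
    Prod.ext_iff.1 (hξp.trans hηp.symm)
  have hdisj_cross : Disjoint (a ξ) (b η) :=
    disjoint_of_sdiff_le_of_inf_le (disjoint_iff_inter_eq_empty.2 (hdisj ξ hξ))
      (disjoint_iff_inter_eq_empty.2 (hdisj η hη)) (ha.trans_subset sdiff_subset)
      (hb.symm.trans_subset inter_subset_right)
  exact not_disjoint_iff_nonempty_inter.2 hne hdisj_cross

/-- a nice disjoint `(θ,θ)` pair is a gap, i.e. it cannot be split:
there is no `c ⊆ ω` with `a ξ \ c` finite and `c ∩ b ξ` finite for all `ξ < θ`. -/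
theorem statement0 (θ : Cardinal.{0}) (a b : Ordinal.{0} → Set ℕ)
    (hκ : ℵ₀ < θ.ord.cof) (hsing : θ.ord.cof < θ)
    (hpair : IsPair θ a b)
    (hdisj : ∀ ξ < θ.ord, a ξ ∩ b ξ = ∅)
    (hnice : IsNice θ a b) :
    ¬ ∃ c : Set ℕ, ∀ ξ < θ.ord, (a ξ \ c).Finite ∧ (c ∩ b ξ).Finite :=
  statement0_general θ a b hκ hdisj hnice
end

section
/- If (A,B) is a disjoint (θ,θ) pair that is locally split, then the partial order S(A,B) is c.c.c.: every set of pairwise incompatible elements of S(A,B) is countable. -/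
open Cardinal Set

/-- The partial order `S(A,B)`: finite partial functions from `θ` to `ω`
(coded as finite functional sets of pairs) such that
`(a ξ \ f ξ) ∩ (b η \ f η) = ∅` for all `ξ, η` in the domain, where
`a ξ \ m` denotes `{n ∈ a ξ | m ≤ n}`.  `g` extends `f` iff `g ⊇ f`, and
`f, g` are compatible iff `f ∪ g ∈ S(A,B)`. -/
def SCond (θ : Cardinal.{0}) (a b : Ordinal.{0} → Set ℕ) : Set (Finset (Ordinal.{0} × ℕ)) :=
  {f | (∀ p ∈ f, ∀ q ∈ f, (p : Ordinal.{0} × ℕ).1 = (q : Ordinal.{0} × ℕ).1 → p = q) ∧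
       (∀ p ∈ f, (p : Ordinal.{0} × ℕ).1 < θ.ord) ∧
       ∀ p ∈ f, ∀ q ∈ f,
         {n | n ∈ a (p : Ordinal.{0} × ℕ).1 ∧ p.2 ≤ n} ∩
         {n | n ∈ b (q : Ordinal.{0} × ℕ).1 ∧ q.2 ≤ n} = ∅}

/-- The pair `(A,B)` is locally split: any subfamilies of combined size `≤ ℵ₁` split. -/
def LocallySplit (θ : Cardinal.{0}) (a b : Ordinal.{0} → Set ℕ) : Prop :=
  ∀ I J : Set Ordinal.{0}, I ⊆ Set.Iio θ.ord → J ⊆ Set.Iio θ.ord →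
    #(↥(I ∪ J)) ≤ Cardinal.aleph 1 →
    ∃ c : Set ℕ, (∀ ξ ∈ I, (a ξ \ c).Finite) ∧ ∀ η ∈ J, (c ∩ b η).Finite

/-!
If `c` splits `(A, B)` and `f` is a condition, then enlarging `c` by the tails `a ξ \ f ξ` and
removing the tails `b ξ \ f ξ` changes only finitely many elements of `c`, and the resulting set
separates the tails of `f` exactly. There are only countably many finite modifications of `c`, and
on an index set of size at most continuum countably many functions into `ω` extend all finite
partial ones (Engelking–Karłowicz). Two conditions with the same separating set and the same
extending function are compatible, so a split pair indexed by at most continuum many indices gives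
a `σ`-centered order. An uncountable antichain would contain one of size `ℵ₁ ≤ 𝔠`, which involves
only `ℵ₁` indices, and local splitting applies to those.
-/

universe u

section Cardinality

variable {α : Type u}

theorem exists_injOn_real_of_mk_le_continuum {S : Set α} (hS : #S ≤ 𝔠) :
    ∃ r : α → ℝ, InjOn r S := by
  classical
  have hlift : lift.{0} #S ≤ lift.{u} #ℝ := by simpa [mk_real] using hS
  obtain ⟨e⟩ := lift_mk_le'.1 hlift
  refine ⟨fun x ↦ if hx : x ∈ S then e ⟨x, hx⟩ else 0, fun x hx y hy hxy ↦ ?_⟩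
  simpa [hx, hy] using hxy

theorem mk_biUnion_finset_le {κ : Cardinal.{u}} (hκ : ℵ₀ ≤ κ) {F : Set (Finset α)} (hF : #F ≤ κ) :
    #(⋃ f ∈ F, (f : Set α) : Set α) ≤ κ := by
  have hfinite (f : F) : #(f.1 : Set α) ≤ κ := (finset_card_lt_aleph0 f.1).le.trans hκ
  calc #(⋃ f ∈ F, (f : Set α) : Set α)
      ≤ #F * ⨆ f : F, #(f.1 : Set α) := mk_biUnion_le _ F
    _ ≤ κ * κ := mul_le_mul' hF (ciSup_le' hfinite)
    _ = κ := mul_eq_self hκ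

theorem countable_of_forall_subset_mk_le_aleph_one {A : Set α}
    (hA : ∀ A' ⊆ A, #A' ≤ ℵ₁ → A'.Countable) : A.Countable := by
  by_contra hunc
  have hle : ℵ₁ ≤ #A := aleph_one_le_iff.2 (not_le.1 (mt le_aleph0_iff_set_countable.1 hunc))
  obtain ⟨A', hA'A, hcard⟩ := le_mk_iff_exists_subset.1 hle
  have hcountable : #A' ≤ ℵ₀ := le_aleph0_iff_set_countable.2 (hA A' hA'A hcard.le)
  exact (hcountable.trans_lt aleph0_lt_aleph_one).ne hcard

end Cardinality

section EngelkingKarlowicz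

open TopologicalSpace

theorem exists_continuousMap_interpolating {K ι : Type*} [Field K] [TopologicalSpace K]
    [IsTopologicalSemiring K] {s : Finset ι} {x : ι → K} (hx : InjOn x s) (y : ι → K) :
    ∃ g : C(K, K), ∀ i ∈ s, g (x i) = y i := by
  classical
  exact ⟨(Lagrange.interpolate s x y).toContinuousMap,
    fun _ hi ↦ Lagrange.eval_interpolate_at_node y hx hi⟩

/- Embed `S` in `ℝ` and round down the members of a countable dense subset of `C(ℝ, ℝ)`. Aiming at
half-integers makes the values that round correctly an open set. -/
theorem exists_seq_forall_finset_eqOn {ι : Type u} {S : Set ι} (hS : #S ≤ 𝔠) :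
    ∃ h : ℕ → ι → ℕ, ∀ s : Finset ι, ↑s ⊆ S → ∀ φ : ι → ℕ, ∃ n, EqOn (h n) φ s := by
  obtain ⟨r, hr⟩ := exists_injOn_real_of_mk_le_continuum hS
  refine ⟨fun n i ↦ ⌊denseSeq C(ℝ, ℝ) n (r i)⌋₊, fun s hs φ ↦ ?_⟩
  let U : Set C(ℝ, ℝ) := ⋂ i ∈ s, {g | g (r i) ∈ Ioo (φ i : ℝ) (φ i + 1)}
  have hU : IsOpen U := isOpen_biInter_finset fun i _ ↦
    isOpen_Ioo.preimage (continuous_eval_const (r i))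
  have hU_nonempty : U.Nonempty := by
    obtain ⟨g, hg⟩ := exists_continuousMap_interpolating (hr.mono hs)
      fun i ↦ (φ i : ℝ) + 1 / 2
    refine ⟨g, mem_iInter₂.2 fun i hi ↦ ?_⟩
    rw [mem_ofPred_eq, hg i hi]
    constructor <;> linarith
  obtain ⟨n, hn⟩ := (denseRange_denseSeq C(ℝ, ℝ)).exists_mem_open hU hU_nonempty
  refine ⟨n, fun i hi ↦ ?_⟩
  obtain ⟨hlower, hupper⟩ := mem_iInter₂.1 hn i hi
  exact (Nat.floor_eq_iff ((Nat.cast_nonneg _).trans hlower.le)).2 ⟨hlower.le, hupper⟩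

end EngelkingKarlowicz

theorem exists_forall_mem_apply_fst_eq_snd {α β : Type*} [Nonempty β] {G : Set (α × β)}
    (hG : InjOn Prod.fst G) : ∃ φ : α → β, ∀ p ∈ G, φ p.1 = p.2 := by
  obtain rfl | ⟨p₀, -⟩ := G.eq_empty_or_nonempty
  · simp
  · have : Nonempty (α × β) := ⟨p₀⟩
    exact ⟨fun x ↦ (Function.invFunOn Prod.fst G x).2, fun p hp ↦
      congrArg Prod.snd (hG.leftInvOn_invFunOn hp)⟩

theorem countable_setOf_finite_symmDiff {α : Type*} [Countable α] (c : Set α) :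
    {d : Set α | (symmDiff c d).Finite}.Countable :=
  Countable.ofPred_finite.preimage (symmDiff_right_injective c)

section SigmaCentered

variable {α : Type*}

/-- A `σ`-centered family of finite sets under reverse inclusion: each member lies in one of
countably many sets `G` all of whose finite subsets belong to the family. Lower bounds of finitely
many members inside the same `G` are given by their union. -/
def IsSigmaCentered (C : Set (Finset α)) : Prop :=
  ∃ 𝒢 : Set (Set α), 𝒢.Countable ∧ (∀ f ∈ C, ∃ G ∈ 𝒢, ↑f ⊆ G) ∧
    ∀ G ∈ 𝒢, ∀ f : Finset α, ↑f ⊆ G → f ∈ C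

theorem IsSigmaCentered.countable_of_forall_union_notMem [DecidableEq α] {C A : Set (Finset α)}
    (hC : IsSigmaCentered C) (hAC : A ⊆ C)
    (hanti : ∀ f ∈ A, ∀ g ∈ A, f ≠ g → f ∪ g ∉ C) : A.Countable := by
  obtain ⟨𝒢, h𝒢, hcover, hcentered⟩ := hC
  have hsubsingleton : ∀ G ∈ 𝒢, {f ∈ A | ↑f ⊆ G}.Subsingleton := by
    rintro G hG f ⟨hfA, hfG⟩ g ⟨hgA, hgG⟩
    by_contra hne
    refine hanti f hfA g hgA hne (hcentered G hG _ ?_)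
    rw [Finset.coe_union]
    exact union_subset hfG hgG
  refine (h𝒢.biUnion fun G hG ↦ (hsubsingleton G hG).countable).mono fun f hf ↦ ?_
  obtain ⟨G, hG, hfG⟩ := hcover f (hAC hf)
  exact mem_biUnion hG ⟨hf, hfG⟩

end SigmaCentered

section SplitCond

variable {ι : Type u} {S : Set ι} {a b : ι → Set ℕ}

/-- The set `c` splits the families `a` and `b` restricted to the indices in `S`. -/
def SplitsOn (c : Set ℕ) (S : Set ι) (a b : ι → Set ℕ) : Prop :=
  ∀ ξ ∈ S, (a ξ \ c).Finite ∧ (c ∩ b ξ).Finite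

/-- The tail `a ξ \ m` of a member of the family `a`, for `p = (ξ, m)`. -/
def tail (a : ι → Set ℕ) (p : ι × ℕ) : Set ℕ := {n | n ∈ a p.1 ∧ p.2 ≤ n}

/-- The order `S(A,B)` for families indexed by a subset `S` of an arbitrary type; `SCond` is the
case of the ordinals below `θ.ord`. As there, a partial function is coded by its graph. -/
def SplitCond (S : Set ι) (a b : ι → Set ℕ) : Set (Finset (ι × ℕ)) :=
  {f | InjOn Prod.fst (f : Set (ι × ℕ)) ∧ (∀ p ∈ f, p.1 ∈ S) ∧
    ∀ p ∈ f, ∀ q ∈ f, Disjoint (tail a p) (tail b q)}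

/-- The points of the graph of `h` over `S` whose tails are separated by `d`. The finite subsets of
this set are compatible conditions. -/
def separatedGraph (S : Set ι) (a b : ι → Set ℕ) (h : ι → ℕ) (d : Set ℕ) : Set (ι × ℕ) :=
  {p | p.1 ∈ S ∧ h p.1 = p.2 ∧ tail a p ⊆ d ∧ Disjoint d (tail b p)}

theorem SCond_eq_splitCond (θ : Cardinal.{0}) (a b : Ordinal.{0} → Set ℕ) :
    SCond θ a b = SplitCond (Iio θ.ord) a b := by
  ext f
  simp only [SCond, SplitCond, tail, InjOn, disjoint_iff_inter_eq_empty, mem_ofPred_eq, mem_Iio,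
    Finset.mem_coe]

theorem mem_splitCond_of_subset_separatedGraph {h : ι → ℕ} {d : Set ℕ} {f : Finset (ι × ℕ)}
    (hf : ↑f ⊆ separatedGraph S a b h d) : f ∈ SplitCond S a b := by
  refine ⟨fun p hp q hq hpq ↦ ?_, fun p hp ↦ (hf hp).1, fun p hp q hq ↦ ?_⟩
  · obtain ⟨-, hhp, -, -⟩ := hf hp
    obtain ⟨-, hhq, -, -⟩ := hf hq
    exact Prod.ext hpq (by rw [← hhp, ← hhq, hpq])
  · obtain ⟨-, -, hpd, -⟩ := hf hp
    obtain ⟨-, -, -, hdq⟩ := hf hq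
    exact hdq.mono_left hpd

theorem SplitsOn.exists_separating {c : Set ℕ} (hc : SplitsOn c S a b) {f : Finset (ι × ℕ)}
    (hf : f ∈ SplitCond S a b) :
    ∃ d, (symmDiff c d).Finite ∧ ∀ p ∈ f, tail a p ⊆ d ∧ Disjoint d (tail b p) := by
  obtain ⟨-, hfS, hdisj⟩ := hf
  set aTails := ⋃ p ∈ f, tail a p
  set bTails := ⋃ p ∈ f, tail b p
  have ha_sub : ∀ p ∈ f, tail a p ⊆ aTails := fun p hp ↦ subset_biUnion_of_mem hp
  have hb_sub : ∀ p ∈ f, tail b p ⊆ bTails := fun p hp ↦ subset_biUnion_of_mem hp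
  have hab : Disjoint aTails bTails := by
    simpa only [aTails, bTails, disjoint_iUnion_left, disjoint_iUnion_right] using
      fun p hp q hq ↦ hdisj q hq p hp
  have ha : (aTails \ c).Finite := by
    simp only [aTails, iUnion_sdiff]
    exact f.finite_toSet.biUnion fun p hp ↦
      (hc p.1 (hfS p hp)).1.subset (sdiff_subset_sdiff_left fun _ hn ↦ hn.1)
  have hb : (c ∩ bTails).Finite := by
    simp only [bTails, inter_iUnion]
    exact f.finite_toSet.biUnion fun p hp ↦
      (hc p.1 (hfS p hp)).2.subset (inter_subset_inter_right c fun _ hn ↦ hn.1)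
  refine ⟨(c ∪ aTails) \ bTails, (ha.union hb).subset ?_, fun p hp ↦ ⟨?_, ?_⟩⟩
  · rintro n (⟨hnc, hnd⟩ | ⟨⟨hn, -⟩, hnc⟩)
    · exact Or.inr ⟨hnc, by_contra fun hnb ↦ hnd ⟨Or.inl hnc, hnb⟩⟩
    · exact Or.inl ⟨hn.resolve_left hnc, hnc⟩
  · exact subset_sdiff.2 ⟨(ha_sub p hp).trans subset_union_right, hab.mono_left (ha_sub p hp)⟩
  · exact disjoint_sdiff_left.mono_right (hb_sub p hp)

theorem SplitsOn.isSigmaCentered {c : Set ℕ} (hc : SplitsOn c S a b) (hS : #S ≤ 𝔠) :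
    IsSigmaCentered (SplitCond S a b) := by
  obtain ⟨h, hh⟩ := exists_seq_forall_finset_eqOn hS
  refine ⟨image2 (fun n d ↦ separatedGraph S a b (h n) d) univ {d | (symmDiff c d).Finite},
    countable_univ.image2 (countable_setOf_finite_symmDiff c) _, fun f hf ↦ ?_, ?_⟩
  · classical
    obtain ⟨φ, hφ⟩ := exists_forall_mem_apply_fst_eq_snd hf.1
    obtain ⟨n, hn⟩ := hh (f.image Prod.fst) (by simpa [subset_def] using hf.2.1) φ
    obtain ⟨d, hcd, hd⟩ := hc.exists_separating hf
    refine ⟨_, mem_image2_of_mem (mem_univ n) hcd, fun p hp ↦ ?_⟩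
    have hnp : h n p.1 = φ p.1 := hn (Finset.mem_image_of_mem Prod.fst hp)
    exact ⟨hf.2.1 p hp, hnp.trans (hφ p hp), hd p hp⟩
  · rintro _ ⟨n, -, d, -, rfl⟩ f hf
    exact mem_splitCond_of_subset_separatedGraph hf

end SplitCond

theorem statement1_general {ι : Type u} [DecidableEq ι] (S : Set ι) (a b : ι → Set ℕ)
    (hls : ∀ D ⊆ S, #D ≤ ℵ₁ → ∃ c, SplitsOn c D a b) :
    ∀ A ⊆ SplitCond S a b,
      (∀ f ∈ A, ∀ g ∈ A, f ≠ g → f ∪ g ∉ SplitCond S a b) → A.Countable := by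
  intro A hA hanti
  refine countable_of_forall_subset_mk_le_aleph_one fun A' hA'A hA'card ↦ ?_
  let D : Set ι := Prod.fst '' ⋃ f ∈ A', (f : Set (ι × ℕ))
  have hDS : D ⊆ S := by
    rintro _ ⟨p, hp, rfl⟩
    obtain ⟨f, hf, hpf⟩ := mem_iUnion₂.1 hp
    exact (hA (hA'A hf)).2.1 p hpf
  have hDcard : #D ≤ ℵ₁ := mk_image_le.trans (mk_biUnion_finset_le (aleph0_le_aleph 1) hA'card)
  have hA'D : A' ⊆ SplitCond D a b := fun f hf ↦
    ⟨(hA (hA'A hf)).1, fun p hp ↦ mem_image_of_mem _ (mem_biUnion hf hp), (hA (hA'A hf)).2.2⟩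
  obtain ⟨c, hc⟩ := hls D hDS hDcard
  refine (hc.isSigmaCentered (hDcard.trans aleph_one_le_continuum)).countable_of_forall_union_notMem
    hA'D fun f hf g hg hne hfg ↦ ?_
  exact hanti f (hA'A hf) g (hA'A hg) hne ⟨hfg.1, fun p hp ↦ hDS (hfg.2.1 p hp), hfg.2.2⟩

/-- if `(A,B)` is a disjoint locally split `(θ,θ)` pair then `S(A,B)`
is c.c.c.: every pairwise incompatible subset is countable. -/
theorem statement1 (θ : Cardinal.{0}) (a b : Ordinal.{0} → Set ℕ)
    (hκ : ℵ₀ < θ.ord.cof) (hsing : θ.ord.cof < θ)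
    (hpair : IsPair θ a b)
    (hdisj : ∀ ξ < θ.ord, a ξ ∩ b ξ = ∅)
    (hls : LocallySplit θ a b) :
    ∀ A ⊆ SCond θ a b,
      (∀ f ∈ A, ∀ g ∈ A, f ≠ g → f ∪ g ∉ SCond θ a b) → A.Countable := by
  rw [SCond_eq_splitCond]
  exact statement1_general _ a b fun D hD hcard ↦ by
    simpa only [SplitsOn, forall₂_and] using hls D D hD hD (by rwa [union_self])
end

section
/- Let (A,B) be a (θ,θ) pair. Then (A,B) is nice if and only if for every two families X = {x_u : u < θ} and Y = {y_v : v < θ} of pairwise disjoint finite subsets of θ, every X-sequence S = ⟨S_α : α < κ⟩ and every Y-sequence T = ⟨T_α : α < κ⟩, the product partial order Q(X,S) × Q(Y,T) is κ.c.c. -/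
open Cardinal Set

/-- `S` is an `X`-sequence (relative to the fixed sequence `θseq` of cardinals
converging to `θ`): the `S α` (for `α < κ = cof θ`) are pairwise disjoint subsets
of `θ` with `|S α| > θ_α` and `a(x_i) ∩ b(x_j) = ∅` for all `i, j ∈ S α`. -/
def XSeq (θ : Cardinal.{0}) (θseq : Ordinal.{0} → Cardinal.{0}) (a b : Ordinal.{0} → Set ℕ)
    (x S : Ordinal.{0} → Set Ordinal.{0}) : Prop :=
  (∀ α < θ.ord.cof.ord, S α ⊆ Set.Iio θ.ord) ∧
  (∀ α < θ.ord.cof.ord, ∀ β < θ.ord.cof.ord, α ≠ β → Disjoint (S α) (S β)) ∧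
  (∀ α < θ.ord.cof.ord, Cardinal.lift.{1,0} (θseq α) < #(S α)) ∧
  ∀ α < θ.ord.cof.ord, ∀ i ∈ S α, ∀ j ∈ S α, inters a (x i) ∩ inters b (x j) = ∅

/-- The partial order `Q(X,S)`: finite `F ⊆ κ` such that for all distinct
`α, β ∈ F` there are `i ∈ S α`, `j ∈ S β` with `a(x_i) ∩ b(x_j) ≠ ∅` or
`b(x_i) ∩ a(x_j) ≠ ∅`; `F, K` are compatible iff `F ∪ K ∈ Q(X,S)`. -/
def QSet (θ : Cardinal.{0}) (a b : Ordinal.{0} → Set ℕ) (x S : Ordinal.{0} → Set Ordinal.{0}) :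
    Set (Finset Ordinal.{0}) :=
  {F | (∀ α ∈ F, α < θ.ord.cof.ord) ∧
    ∀ α ∈ F, ∀ β ∈ F, α ≠ β → ∃ i ∈ S α, ∃ j ∈ S β,
      ((inters a (x i) ∩ inters b (x j)).Nonempty ∨
        (inters b (x i) ∩ inters a (x j)).Nonempty)}

/-- A poset of finite sets (with compatibility = union belongs to the poset) is
`κ.c.c.` if it has no antichain of cardinality `κ`. -/
def KCC (κ : Cardinal.{0}) (Q : Set (Finset Ordinal.{0})) : Prop :=
  ¬ ∃ A : Set (Finset Ordinal.{0}),
      A ⊆ Q ∧ (∀ F ∈ A, ∀ K ∈ A, F ≠ K → F ∪ K ∉ Q) ∧ #A = Cardinal.lift.{1,0} κ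

/-- The product of two such posets is `κ.c.c.`: there is no set of pairwise
incompatible pairs (compatibility taken coordinatewise) of cardinality `κ`. -/
def KCC2 (κ : Cardinal.{0}) (Q₁ Q₂ : Set (Finset Ordinal.{0})) : Prop :=
  ¬ ∃ A : Set (Finset Ordinal.{0} × Finset Ordinal.{0}),
      (∀ p ∈ A, p.1 ∈ Q₁ ∧ p.2 ∈ Q₂) ∧
      (∀ p ∈ A, ∀ q ∈ A, p ≠ q → ¬(p.1 ∪ q.1 ∈ Q₁ ∧ p.2 ∪ q.2 ∈ Q₂)) ∧
      #A = Cardinal.lift.{1,0} κ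

/-!
Suppose `(A, B)` is nice and `Q(X, S) × Q(Y, T)` has an antichain of size `κ`. A `Δ`-system argument
gives a root `R` such that the antichain contains conditions whose part outside `R` lies above any
given `γ < κ`. For a condition `p`, choose an index in each of the sets `S α`, `T α` attached to
`p \ R` and take the union `z` of the corresponding members of `X` and `Y`. As `a(·)` and `b(·)`
are antitone, one pair of orthogonal sets among those selected is enough for `a(z) ∩ b(z') = ∅`:
incompatibility provides it for distinct conditions, the definition of an `X`-sequence for a
condition and itself. As `|S α| > θ_α`, the sets `z` can be chosen to avoid any set of size less
than `θ`, so `θ` many of them are pairwise disjoint, against niceness.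

Conversely, a family `X` violating niceness makes any two distinct singletons incompatible in
`Q(X, S)`, where `S` comes from a partition of `θ` into `κ` pieces of size `θ`.
-/

universe u

section Combinatorics

variable {ι α : Type*}

theorem exists_notMem_le_mk_setOf_mem {c : Cardinal} (hc : c.IsRegular) {A : Set (Finset ι)}
    {R : Finset ι} {U : Set ι} (hA : c ≤ #A) (hRA : ∀ p ∈ A, R ⊆ p) (hU : #U < c)
    (hmeet : ∀ p ∈ A, R ⊂ p → ¬(↑p ∩ U ⊆ (R : Set ι))) :
    ∃ s ∉ R, c ≤ #{p ∈ A | s ∈ p} := by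
  by_contra! hsmall
  have hcover : A ⊆ {R} ∪ ⋃ s ∈ U \ R, {p ∈ A | s ∈ p} := by
    intro p hp
    rcases (hRA p hp).eq_or_ssubset with rfl | hRp
    · exact Or.inl rfl
    · obtain ⟨s, ⟨hsp, hsU⟩, hsR⟩ := not_subset.1 (hmeet p hp hRp)
      exact Or.inr (mem_biUnion ⟨hsU, hsR⟩ ⟨hp, hsp⟩)
  have hunion : #(⋃ s ∈ U \ R, {p ∈ A | s ∈ p}) < c :=
    (card_biUnion_lt_iff_forall_of_isRegular hc ((mk_le_mk_of_subset sdiff_subset).trans_lt hU)).2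
      fun s hs => hsmall s hs.2
  have hsingleton : #({R} : Set (Finset ι)) < c := by
    simpa using one_lt_aleph0.trans_le hc.aleph0_le
  exact hA.not_gt <| (mk_le_mk_of_subset hcover).trans_lt <|
    (mk_union_le _ _).trans_lt <| add_lt_of_lt hc.aleph0_le hsingleton hunion

theorem exists_root_inter_subset_of_card_le {c : Cardinal} (hc : c.IsRegular)
    {A : Set (Finset ι)} {n : ℕ} (hA : c ≤ #A) (hn : ∀ p ∈ A, p.card ≤ n) :
    ∃ R : Finset ι, ∀ U : Set ι, #U < c → ∃ p ∈ A, R ⊂ p ∧ ↑p ∩ U ⊆ (R : Set ι) := by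
  classical
  -- A set of maximal size among those contained in at least `c` members of `A` is a root.
  let L : Set (Finset ι) := {R | c ≤ #{p ∈ A | R ⊆ p}}
  have hbdd : BddAbove (Finset.card '' L) := by
    refine ⟨n, forall_mem_image.2 fun R hR => ?_⟩
    obtain ⟨p, hp, hRp⟩ := mk_set_ne_zero_iff.1 (hc.pos.trans_le hR).ne'
    exact (Finset.card_le_card hRp).trans (hn p hp)
  have hempty : ∅ ∈ L := by simpa [L] using hA
  obtain ⟨R, hR, hRmax⟩ := Nat.sSup_mem ⟨_, mem_image_of_mem _ hempty⟩ hbdd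
  refine ⟨R, fun U hU => ?_⟩
  by_contra! hmeet
  obtain ⟨s, hsR, hs⟩ := exists_notMem_le_mk_setOf_mem hc hR (fun p hp => hp.2) hU
    fun p hp => hmeet p hp.1
  have hinsert : insert s R ∈ L := hs.trans <| mk_le_mk_of_subset fun p hp =>
    ⟨hp.1.1, Finset.insert_subset hp.2 hp.1.2⟩
  have hle := le_csSup hbdd (mem_image_of_mem Finset.card hinsert)
  rw [← hRmax, Finset.card_insert_of_notMem hsR] at hle
  exact Nat.not_succ_le_self _ hle

/-- A weak `Δ`-system lemma: iterating it yields a `Δ`-system in `A` of size `c` with root `R`. -/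
theorem exists_root_inter_subset {c : Cardinal} (hc : c.IsRegular) (hc₀ : ℵ₀ < c)
    {A : Set (Finset ι)} (hA : c ≤ #A) :
    ∃ R : Finset ι, ∀ U : Set ι, #U < c → ∃ p ∈ A, R ⊂ p ∧ ↑p ∩ U ⊆ (R : Set ι) := by
  obtain ⟨n, B, hBA, hB, hn⟩ := infinite_pigeonhole_set
    (fun p : A => ULift.up p.1.card) c hA hc.aleph0_le (by simpa [hc.cof_ord] using hc₀)
  obtain ⟨R, hR⟩ := exists_root_inter_subset_of_card_le hc hB fun p hp =>
    (congrArg ULift.down (hn hp)).le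
  refine ⟨R, fun U hU => ?_⟩
  obtain ⟨p, hp, hpR⟩ := hR U hU
  exact ⟨p, hBA hp, hpR⟩

/-- A family of sets is `c`-evasive if every set of size less than `c` is disjoint from one of its
members. For families of nonempty finite sets this produces `c` many pairwise disjoint members. -/
def Evasive (c : Cardinal) (𝒵 : Set (Set α)) : Prop :=
  ∀ U : Set α, #U < c → ∃ z ∈ 𝒵, Disjoint z U

theorem evasive_image_of_pairwiseDisjoint {ι α : Type u} {S : Set ι} {x : ι → Set α}
    (hx : S.PairwiseDisjoint x) : Evasive #S (x '' S) := by
  intro U hU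
  by_contra! hmeet
  have hmem (i : S) : ∃ u : U, ↑u ∈ x i := by
    obtain ⟨u, hux, huU⟩ := not_disjoint_iff.1 (hmeet _ (mem_image_of_mem x i.2))
    exact ⟨⟨u, huU⟩, hux⟩
  choose f hf using hmem
  have hf_inj : Function.Injective f := fun i j hij =>
    Subtype.ext <| hx.elim_set i.2 j.2 (f i) (hf i) (hij ▸ hf j)
  exact hU.not_ge (mk_le_of_injective hf_inj)

theorem mk_sUnion_lt_of_forall_finite {c : Cardinal} (hc : ℵ₀ ≤ c) {Z : Set (Set α)} (hZ : #Z < c)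
    (hfin : ∀ z ∈ Z, z.Finite) : #(⋃₀ Z) < c := by
  rcases Z.finite_or_infinite with hZfin | hZinf
  · exact (hZfin.sUnion hfin).lt_aleph0.trans_le hc
  · calc #(⋃₀ Z) ≤ #Z * ⨆ z : Z, #z := mk_sUnion_le Z
      _ ≤ #Z * ℵ₀ := by
        gcongr
        exact ciSup_le' fun z : Z => (hfin z z.2).lt_aleph0.le
      _ = #Z := mul_aleph0_eq (infinite_iff.1 hZinf.to_subtype)
      _ < c := hZ

theorem Evasive.exists_pairwiseDisjoint {c : Cardinal} (hc : ℵ₀ ≤ c) {𝒵 : Set (Set α)}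
    (h𝒵 : Evasive c 𝒵) (hfin : ∀ z ∈ 𝒵, z.Finite) (hne : ∀ z ∈ 𝒵, z.Nonempty) :
    ∃ Z ⊆ 𝒵, Z.PairwiseDisjoint id ∧ c ≤ #Z := by
  obtain ⟨Z, hZ⟩ := zorn_subset {Z | Z ⊆ 𝒵 ∧ Z.PairwiseDisjoint id} fun C hC hchain =>
    ⟨⋃₀ C, ⟨sUnion_subset fun Z hZ => (hC hZ).1,
      (hchain.pairwiseDisjoint_sUnion _).2 fun Z hZ => (hC hZ).2⟩,
      fun Z hZ => subset_sUnion_of_mem hZ⟩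
  refine ⟨Z, hZ.prop.1, hZ.prop.2, ?_⟩
  by_contra! hlt
  obtain ⟨z, hz𝒵, hzZ⟩ := h𝒵 _ <|
    mk_sUnion_lt_of_forall_finite hc hlt fun z hz => hfin z (hZ.prop.1 hz)
  have hdisj : ∀ w ∈ Z, Disjoint z w := fun w hw => hzZ.mono_right (subset_sUnion_of_mem hw)
  have hz : z ∈ Z := hZ.mem_of_prop_insert
    ⟨insert_subset hz𝒵 hZ.prop.1, hZ.prop.2.insert fun w hw _ => hdisj w hw⟩
  exact (hne z hz𝒵).ne_empty (disjoint_self.1 (hdisj z hz))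

/-- The sets `⋃ s ∈ p, w s` obtained by choosing one member `w s` of each `𝒲 s`, `s ∈ p`; below,
`p` is a condition with its root removed, and `𝒲 s` consists of the `x_i` with `i ∈ S_s`. -/
def transversalUnions (𝒲 : ι → Set (Set α)) (p : Set ι) : Set (Set α) :=
  {z | ∃ w : ι → Set α, (∀ s ∈ p, w s ∈ 𝒲 s) ∧ z = ⋃ s ∈ p, w s}

theorem exists_mem_subset_of_mem_transversalUnions {𝒲 : ι → Set (Set α)} {p : Set ι} {z : Set α}
    (hz : z ∈ transversalUnions 𝒲 p) {s : ι} (hs : s ∈ p) : ∃ w ∈ 𝒲 s, w ⊆ z := by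
  obtain ⟨w, hw, rfl⟩ := hz
  exact ⟨w s, hw s hs, subset_biUnion_of_mem (u := w) hs⟩

theorem exists_disjoint_mem_transversalUnions {𝒲 : ι → Set (Set α)} {p : Set ι} {U : Set α}
    (h : ∀ s ∈ p, ∃ w ∈ 𝒲 s, Disjoint w U) : ∃ z ∈ transversalUnions 𝒲 p, Disjoint z U := by
  choose! w hw hwU using h
  exact ⟨_, ⟨w, hw, rfl⟩, disjoint_iUnion₂_left.2 hwU⟩

theorem finite_and_subset_of_mem_transversalUnions {𝒲 : ι → Set (Set α)} {p : Set ι}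
    (hp : p.Finite) {X : Set α} (h𝒲 : ∀ s ∈ p, ∀ w ∈ 𝒲 s, w.Finite ∧ w ⊆ X) {z : Set α}
    (hz : z ∈ transversalUnions 𝒲 p) : z.Finite ∧ z ⊆ X := by
  obtain ⟨w, hw, rfl⟩ := hz
  exact ⟨hp.biUnion fun s hs => (h𝒲 s hs _ (hw s hs)).1,
    iUnion₂_subset fun s hs => (h𝒲 s hs _ (hw s hs)).2⟩

theorem exists_pairwiseDisjoint_subset_Iio_ord {κ θ : Cardinal.{u}} (hθ : ℵ₀ ≤ θ) (hκ : κ ≤ θ) :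
    ∃ S : Ordinal.{u} → Set Ordinal.{u}, (∀ α, S α ⊆ Iio θ.ord) ∧
      univ.PairwiseDisjoint S ∧ ∀ α < κ.ord, lift.{u + 1} θ ≤ #(S α) := by
  have hprod : #(Iio κ.ord × Iio θ.ord) ≤ #(Iio θ.ord) := by
    simpa using mul_le_max_of_aleph0_le_right (a := lift.{u + 1} κ) (b := lift.{u + 1} θ)
      (by simpa using hθ) |>.trans (max_le (lift_le.2 hκ) le_rfl)
  obtain ⟨e⟩ := hprod
  have hinj : Function.Injective fun q => (e q : Ordinal) :=
    Subtype.val_injective.comp e.injective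
  refine ⟨fun α => (fun q => (e q : Ordinal)) '' {q | q.1 = α}, fun α => ?_, fun α _ β _ hαβ => ?_,
    fun α hα => ?_⟩
  · exact image_subset_iff.2 fun q _ => (e q).2
  · refine (disjoint_image_iff hinj).2 (disjoint_left.2 fun q hqα hqβ => hαβ ?_)
    exact hqα.symm.trans hqβ
  · rw [mk_image_eq hinj]
    calc lift.{u + 1} θ = #(Iio θ.ord) := by simp
      _ ≤ #{q : Iio κ.ord × Iio θ.ord | q.1 = α} :=
        mk_le_of_injective (f := fun v => ⟨(⟨α, hα⟩, v), rfl⟩) fun v v' h => by simpa using h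

end Combinatorics

/-- `a(z) ∩ b(w) = ∅` for all `z ∈ 𝒵` and `w ∈ 𝒲`. In this language, niceness says that no family
of `θ` many pairwise disjoint finite subsets of `θ` is orthogonal to itself. -/
def Orthogonal (a b : Ordinal.{0} → Set ℕ) (𝒵 𝒲 : Set (Set Ordinal.{0})) : Prop :=
  ∀ z ∈ 𝒵, ∀ w ∈ 𝒲, inters a z ∩ inters b w = ∅

section NicePair

variable {θ : Cardinal.{0}} {a b : Ordinal.{0} → Set ℕ}

theorem inters_anti (a : Ordinal.{0} → Set ℕ) : Antitone (inters a) :=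
  fun _ _ h => biInter_subset_biInter_left h

theorem orthogonal_transversalUnions {ι : Type*} {𝒲 : ι → Set (Set Ordinal.{0})} {p q : Set ι}
    {s t : ι} (hs : s ∈ p) (ht : t ∈ q) (h : Orthogonal a b (𝒲 s) (𝒲 t)) :
    Orthogonal a b (transversalUnions 𝒲 p) (transversalUnions 𝒲 q) := by
  intro z hz z' hz'
  obtain ⟨w, hw, hwz⟩ := exists_mem_subset_of_mem_transversalUnions hz hs
  obtain ⟨w', hw', hwz'⟩ := exists_mem_subset_of_mem_transversalUnions hz' ht
  exact subset_eq_empty (inter_subset_inter (inters_anti a hwz) (inters_anti b hwz'))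
    (h w hw w' hw')

theorem Orthogonal.nonempty_of_mem {𝒵 : Set (Set Ordinal.{0})} (h : Orthogonal a b 𝒵 𝒵)
    {z : Set Ordinal.{0}} (hz : z ∈ 𝒵) : z.Nonempty := by
  rw [nonempty_iff_ne_empty]
  rintro rfl
  simpa [inters] using h ∅ hz ∅ hz

theorem exists_disjFinFam_of_le_mk {Z : Set (Set Ordinal.{0})} (hZ : lift.{1} θ ≤ #Z)
    (hfin : ∀ z ∈ Z, z.Finite ∧ z ⊆ Iio θ.ord) (hdisj : Z.PairwiseDisjoint id) :
    ∃ x, DisjFinFam θ x ∧ ∀ i < θ.ord, x i ∈ Z := by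
  have hcard : #(Iio θ.ord) ≤ #Z := by simpa using hZ
  obtain ⟨e⟩ := hcard
  let x : Ordinal.{0} → Set Ordinal.{0} :=
    Function.extend Subtype.val (fun i => (e i : Set Ordinal.{0})) fun _ => ∅
  have hx (i) (hi : i < θ.ord) : x i = e ⟨i, hi⟩ :=
    Subtype.val_injective.extend_apply _ _ (⟨i, hi⟩ : Iio θ.ord)
  have hxZ (i) (hi : i < θ.ord) : x i ∈ Z := hx i hi ▸ (e ⟨i, hi⟩).2
  refine ⟨x, ⟨fun i hi => hfin _ (hxZ i hi), fun i hi j hj hij => ?_⟩, hxZ⟩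
  refine hdisj (hxZ i hi) (hxZ j hj) fun heq => hij ?_
  have he : e ⟨i, hi⟩ = e ⟨j, hj⟩ := Subtype.ext ((hx i hi).symm.trans (heq.trans (hx j hj)))
  exact congrArg Subtype.val (e.injective he)

theorem IsNice.not_orthogonal_of_evasive (hnice : IsNice θ a b) (hθ : ℵ₀ ≤ θ)
    {𝒵 : Set (Set Ordinal.{0})} (hfin : ∀ z ∈ 𝒵, z.Finite ∧ z ⊆ Iio θ.ord)
    (h𝒵 : Evasive (lift.{1} θ) 𝒵) : ¬Orthogonal a b 𝒵 𝒵 := by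
  intro horth
  obtain ⟨Z, hZ𝒵, hdisj, hZ⟩ := h𝒵.exists_pairwiseDisjoint (aleph0_le_lift.2 hθ)
    (fun z hz => (hfin z hz).1) fun z hz => horth.nonempty_of_mem hz
  obtain ⟨x, hx, hxZ⟩ := exists_disjFinFam_of_le_mk hZ (fun z hz => hfin z (hZ𝒵 hz)) hdisj
  obtain ⟨i, hi, j, hj, hne⟩ := hnice x hx
  exact hne.ne_empty (horth _ (hZ𝒵 (hxZ i hi)) _ (hZ𝒵 (hxZ j hj)))

theorem IsNice.mk_lt_of_pairwise_orthogonal (hnice : IsNice θ a b) (hθ : ℵ₀ ≤ θ)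
    {c : Cardinal.{1}} (hc : c.IsRegular) (hc₀ : ℵ₀ < c) {ι : Type 1}
    {𝒲 : ι → Set (Set Ordinal.{0})} {K : Set ι}
    (hfin : ∀ s ∈ K, ∀ w ∈ 𝒲 s, w.Finite ∧ w ⊆ Iio θ.ord)
    (hself : ∀ s ∈ K, Orthogonal a b (𝒲 s) (𝒲 s))
    (havoid : ∀ U : Set Ordinal.{0}, #U < lift.{1} θ →
      ∃ V : Set ι, #V < c ∧ ∀ s ∈ K \ V, ∃ w ∈ 𝒲 s, Disjoint w U)
    {𝒜 : Set (Finset ι)} (h𝒜 : ∀ p ∈ 𝒜, ↑p ⊆ K)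
    (hcross : 𝒜.Pairwise fun p q => ∃ s ∈ (p \ q : Set ι), ∃ t ∈ (q \ p : Set ι),
      Orthogonal a b (𝒲 s) (𝒲 t)) :
    #𝒜 < c := by
  by_contra! hcard
  obtain ⟨R, hR⟩ := exists_root_inter_subset hc hc₀ hcard
  let 𝒵 : Set (Set Ordinal.{0}) := ⋃ p ∈ {p ∈ 𝒜 | R ⊂ p}, transversalUnions 𝒲 (p \ R)
  have h𝒵fin : ∀ z ∈ 𝒵, z.Finite ∧ z ⊆ Iio θ.ord := by
    intro z hz
    obtain ⟨p, ⟨hp, -⟩, hz⟩ := mem_iUnion₂.1 hz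
    exact finite_and_subset_of_mem_transversalUnions p.finite_toSet.sdiff
      (fun s hs => hfin s (h𝒜 p hp hs.1)) hz
  have h𝒵evasive : Evasive (lift.{1} θ) 𝒵 := by
    intro U hU
    obtain ⟨V, hV, hVU⟩ := havoid U hU
    obtain ⟨p, hp, hRp, hpV⟩ := hR V hV
    obtain ⟨z, hz, hzU⟩ := exists_disjoint_mem_transversalUnions (p := p \ R) fun s hs =>
      hVU s ⟨h𝒜 p hp hs.1, fun hsV => hs.2 (hpV ⟨hs.1, hsV⟩)⟩
    exact ⟨z, mem_biUnion ⟨hp, hRp⟩ hz, hzU⟩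
  refine hnice.not_orthogonal_of_evasive hθ h𝒵fin h𝒵evasive fun z hz z' hz' => ?_
  obtain ⟨p, ⟨hp, hRp⟩, hz⟩ := mem_iUnion₂.1 hz
  obtain ⟨q, ⟨hq, hRq⟩, hz'⟩ := mem_iUnion₂.1 hz'
  rcases eq_or_ne p q with rfl | hpq
  · obtain ⟨s, hsp, hsR⟩ := Finset.exists_of_ssubset hRp
    have hs : s ∈ (p \ R : Set ι) := ⟨hsp, hsR⟩
    exact orthogonal_transversalUnions hs hs (hself s (h𝒜 p hp hsp)) z hz z' hz'
  · obtain ⟨s, hs, t, ht, hst⟩ := hcross hp hq hpq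
    have hsR : s ∈ (p \ R : Set ι) := ⟨hs.1, fun hsR => hs.2 (hRq.1 hsR)⟩
    have htR : t ∈ (q \ R : Set ι) := ⟨ht.1, fun htR => ht.2 (hRp.1 htR)⟩
    exact orthogonal_transversalUnions hsR htR hst z hz z' hz'

variable {x S : Ordinal.{0} → Set Ordinal.{0}}

theorem orthogonal_image_iff {I J : Set Ordinal.{0}} :
    Orthogonal a b (x '' I) (x '' J) ↔
      ∀ i ∈ I, ∀ j ∈ J, inters a (x i) ∩ inters b (x j) = ∅ := by
  simp only [Orthogonal, forall_mem_image]

theorem mem_QSet_iff {F : Finset Ordinal.{0}} :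
    F ∈ QSet θ a b x S ↔ (∀ α ∈ F, α < θ.ord.cof.ord) ∧
      (F : Set Ordinal.{0}).Pairwise fun α β =>
        ¬(Orthogonal a b (x '' S α) (x '' S β) ∧ Orthogonal a b (x '' S β) (x '' S α)) := by
  refine and_congr_right' (forall₂_congr fun α _ => forall₂_congr fun β _ => imp_congr_right
    fun _ => ?_)
  simp only [orthogonal_image_iff, ← not_nonempty_iff_eq_empty, inter_comm (inters b _)]
  grind

theorem exists_orthogonal_of_union_notMem_QSet {F K : Finset Ordinal.{0}}
    (hF : F ∈ QSet θ a b x S) (hK : K ∈ QSet θ a b x S) (hFK : F ∪ K ∉ QSet θ a b x S) :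
    ∃ α ∈ (F \ K : Set Ordinal.{0}), ∃ β ∈ (K \ F : Set Ordinal.{0}),
      Orthogonal a b (x '' S α) (x '' S β) := by
  rw [mem_QSet_iff] at hF hK hFK
  have hlt : ∀ α ∈ F ∪ K, α < θ.ord.cof.ord := by
    simpa only [Finset.mem_union, or_imp, forall_and] using ⟨hF.1, hK.1⟩
  have hbad : ∃ α ∈ F, ∃ β ∈ K, α ≠ β ∧
      Orthogonal a b (x '' S α) (x '' S β) ∧ Orthogonal a b (x '' S β) (x '' S α) := by
    by_contra! h
    refine hFK ⟨hlt, ?_⟩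
    rw [Finset.coe_union, pairwise_union]
    exact ⟨hF.2, hK.2, fun α hα β hβ hαβ => ⟨fun horth => h α hα β hβ hαβ horth.1 horth.2,
      fun horth => h α hα β hβ hαβ horth.2 horth.1⟩⟩
  obtain ⟨α, hα, β, hβ, hαβ, horth⟩ := hbad
  exact ⟨α, ⟨hα, fun hαK => hK.2 hαK hβ hαβ horth⟩, β, ⟨hβ, fun hβF => hF.2 hα hβF hαβ horth⟩,
    horth.1⟩

variable {θseq : Ordinal.{0} → Cardinal.{0}} {α : Ordinal.{0}}

theorem XSeq.orthogonal (hS : XSeq θ θseq a b x S) (hα : α < θ.ord.cof.ord) :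
    Orthogonal a b (x '' S α) (x '' S α) :=
  orthogonal_image_iff.2 (hS.2.2.2 α hα)

theorem XSeq.finite_and_subset (hS : XSeq θ θseq a b x S) (hx : DisjFinFam θ x)
    (hα : α < θ.ord.cof.ord) : ∀ w ∈ x '' S α, w.Finite ∧ w ⊆ Iio θ.ord :=
  forall_mem_image.2 fun i hi => hx.1 i (hS.1 α hα hi)

theorem XSeq.exists_disjoint (hS : XSeq θ θseq a b x S) (hx : DisjFinFam θ x)
    (hα : α < θ.ord.cof.ord) {U : Set Ordinal.{0}} (hU : #U ≤ lift.{1} (θseq α)) :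
    ∃ w ∈ x '' S α, Disjoint w U :=
  evasive_image_of_pairwiseDisjoint
    (fun i hi j hj hij => hx.2 i (hS.1 α hα hi) j (hS.1 α hα hj) hij) U
    (hU.trans_lt (hS.2.2.1 α hα))

theorem exists_forall_ge_mk_le_lift {o : Ordinal.{0}} (ho : o ≠ 0)
    (hmono : MonotoneOn θseq (Iio o)) (hsup : sSup (θseq '' Iio o) = θ)
    {U : Set Ordinal.{0}} (hU : #U < lift.{1} θ) :
    ∃ γ < o, ∀ α < o, γ ≤ α → #U ≤ lift.{1} (θseq α) := by
  obtain ⟨μ, hμ, hμU⟩ := lt_lift_iff.1 hU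
  have hne : (Iio o).Nonempty := ⟨0, pos_iff_ne_zero.2 ho⟩
  obtain ⟨_, ⟨γ, hγ, rfl⟩, hμγ⟩ := exists_lt_of_lt_csSup (hne.image θseq) (hμ.trans_eq hsup.symm)
  exact ⟨γ, hγ, fun α hα hγα => hμU ▸ lift_le.2 (hμγ.le.trans (hmono hγ hα hγα))⟩

theorem lt_of_strictMonoOn_of_sSup_eq {o : Ordinal.{0}} (ho : Order.IsSuccLimit o)
    (hmono : StrictMonoOn θseq (Iio o)) (hsup : sSup (θseq '' Iio o) = θ)
    (hα : α < o) : θseq α < θ :=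
  calc θseq α < θseq (Order.succ α) := hmono hα (ho.succ_lt hα) (Order.lt_succ α)
    _ ≤ sSup (θseq '' Iio o) :=
      le_csSup bddAbove_of_small (mem_image_of_mem θseq (ho.succ_lt hα))
    _ = θ := hsup

theorem mk_preimage_sumElim_Iio_lt {c : Cardinal.{u}} (hc : ℵ₀ ≤ c) {γ : Ordinal.{u}}
    (hγ : γ < c.ord) :
    #((Sum.elim id id : Ordinal.{u} ⊕ Ordinal.{u} → Ordinal.{u}) ⁻¹' Iio γ) < lift.{u + 1} c := by
  have hγc : #(Iio γ) < lift.{u + 1} c := by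
    rw [mk_Iio_ordinal]
    exact lift_lt.2 (lt_ord.1 hγ)
  rw [preimage_sumElim]
  exact (mk_union_le _ _).trans_lt <|
    add_lt_of_lt (aleph0_le_lift.2 hc) (mk_image_le.trans_lt hγc) (mk_image_le.trans_lt hγc)

theorem IsNice.kcc2 (hnice : IsNice θ a b) (hκ : ℵ₀ < θ.ord.cof)
    (hmono : MonotoneOn θseq (Iio θ.ord.cof.ord)) (hsup : sSup (θseq '' Iio θ.ord.cof.ord) = θ)
    {y T : Ordinal.{0} → Set Ordinal.{0}} (hx : DisjFinFam θ x) (hy : DisjFinFam θ y)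
    (hS : XSeq θ θseq a b x S) (hT : XSeq θ θseq a b y T) :
    KCC2 θ.ord.cof (QSet θ a b x S) (QSet θ a b y T) := by
  rintro ⟨A, hAQ, hA, hAcard⟩
  have hθ : ℵ₀ ≤ θ := hκ.le.trans (Ordinal.cof_ord_le θ)
  have hreg : θ.ord.cof.IsRegular := isRegular_cof (isSuccLimit_ord hθ)
  let 𝒲 : Ordinal ⊕ Ordinal → Set (Set Ordinal) := Sum.elim (fun α => x '' S α) fun α => y '' T α
  let K : Set (Ordinal ⊕ Ordinal) := Sum.elim id id ⁻¹' Iio θ.ord.cof.ord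
  let 𝒜 : Set (Finset (Ordinal ⊕ Ordinal)) := Finset.sumEquiv ⁻¹' A
  have h𝒜card : #𝒜 = lift.{1} θ.ord.cof :=
    (mk_preimage_equiv Finset.sumEquiv.toEquiv A).trans hAcard
  refine h𝒜card.not_lt <| hnice.mk_lt_of_pairwise_orthogonal hθ hreg.lift (aleph0_lt_lift.2 hκ)
    (𝒲 := 𝒲) (K := K) ?_ ?_ (fun U hU => ?_) (fun p hp => ?_) fun p hp q hq hpq => ?_
  · rintro (α | α) hα
    exacts [hS.finite_and_subset hx hα, hT.finite_and_subset hy hα]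
  · rintro (α | α) hα
    exacts [hS.orthogonal hα, hT.orthogonal hα]
  · obtain ⟨γ, hγ, hUγ⟩ := exists_forall_ge_mk_le_lift hreg.ord_pos.ne' hmono hsup hU
    refine ⟨Sum.elim id id ⁻¹' Iio γ, mk_preimage_sumElim_Iio_lt hκ.le hγ, ?_⟩
    rintro (α | α) ⟨hα, hγα⟩
    exacts [hS.exists_disjoint hx hα (hUγ α hα (not_lt.1 hγα)),
      hT.exists_disjoint hy hα (hUγ α hα (not_lt.1 hγα))]
  · rintro (α | α) hα
    exacts [(hAQ _ hp).1.1 α (Finset.mem_toLeft.2 hα), (hAQ _ hp).2.1 α (Finset.mem_toRight.2 hα)]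
  · have hinc := hA _ hp _ hq (Finset.sumEquiv.injective.ne hpq)
    rcases not_and_or.1 hinc with h | h
    · obtain ⟨α, hα, β, hβ, hαβ⟩ :=
        exists_orthogonal_of_union_notMem_QSet (hAQ _ hp).1 (hAQ _ hq).1 h
      exact ⟨.inl α, by simpa using hα, .inl β, by simpa using hβ, hαβ⟩
    · obtain ⟨α, hα, β, hβ, hαβ⟩ :=
        exists_orthogonal_of_union_notMem_QSet (hAQ _ hp).2 (hAQ _ hq).2 h
      exact ⟨.inr α, by simpa using hα, .inr β, by simpa using hβ, hαβ⟩

theorem Orthogonal.exists_xSeq (hx : Orthogonal a b (x '' Iio θ.ord) (x '' Iio θ.ord))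
    (hθ : ℵ₀ ≤ θ) (hlt : ∀ α < θ.ord.cof.ord, θseq α < θ) : ∃ S, XSeq θ θseq a b x S := by
  obtain ⟨S, hSθ, hSdisj, hScard⟩ :=
    exists_pairwiseDisjoint_subset_Iio_ord hθ (Ordinal.cof_ord_le θ)
  exact ⟨S, fun α _ => hSθ α, fun α _ β _ hαβ => hSdisj trivial trivial hαβ,
    fun α hα => (lift_lt.2 (hlt α hα)).trans_le (hScard α hα),
    fun α _ i hi j hj => orthogonal_image_iff.1 hx i (hSθ α hi) j (hSθ α hj)⟩

theorem Orthogonal.not_kcc2 (hx : Orthogonal a b (x '' Iio θ.ord) (x '' Iio θ.ord))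
    (hS : ∀ α < θ.ord.cof.ord, S α ⊆ Iio θ.ord) {y T : Ordinal.{0} → Set Ordinal.{0}} :
    ¬KCC2 θ.ord.cof (QSet θ a b x S) (QSet θ a b y T) := by
  refine not_not.2 ⟨(fun α => ({α}, ∅)) '' Iio θ.ord.cof.ord, forall_mem_image.2 fun α hα => ?_,
    forall_mem_image.2 fun α hα => forall_mem_image.2 fun β hβ hne hcompat => ?_, ?_⟩
  · simpa [mem_QSet_iff] using hα
  · have hαβ : α ≠ β := fun h => hne (h ▸ rfl)
    have horth {α β} (hα : α ∈ Iio θ.ord.cof.ord) (hβ : β ∈ Iio θ.ord.cof.ord) :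
        Orthogonal a b (x '' S α) (x '' S β) :=
      orthogonal_image_iff.2 fun i hi j hj =>
        orthogonal_image_iff.1 hx i (hS α hα hi) j (hS β hβ hj)
    exact (mem_QSet_iff.1 hcompat.1).2 (by simp) (by simp) hαβ ⟨horth hα hβ, horth hβ hα⟩
  · rw [mk_image_eq fun α β h => by simpa using h, mk_Iio_ordinal, card_ord]

theorem exists_disjFinFam_orthogonal_of_not_isNice (h : ¬IsNice θ a b) :
    ∃ x, DisjFinFam θ x ∧ Orthogonal a b (x '' Iio θ.ord) (x '' Iio θ.ord) := by
  simp only [IsNice, not_forall, not_exists, not_and, not_nonempty_iff_eq_empty] at h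
  obtain ⟨x, hx, horth⟩ := h
  exact ⟨x, hx, orthogonal_image_iff.2 horth⟩

end NicePair

theorem statement3_general (θ : Cardinal.{0}) (θseq : Ordinal.{0} → Cardinal.{0})
    (a b : Ordinal.{0} → Set ℕ)
    (hκ : ℵ₀ < θ.ord.cof)
    (hmono : StrictMonoOn θseq (Iio θ.ord.cof.ord))
    (hsup : sSup (θseq '' Iio θ.ord.cof.ord) = θ) :
    IsNice θ a b ↔
      ∀ x y S T : Ordinal.{0} → Set Ordinal.{0}, DisjFinFam θ x → DisjFinFam θ y →
        XSeq θ θseq a b x S → XSeq θ θseq a b y T →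
        KCC2 θ.ord.cof (QSet θ a b x S) (QSet θ a b y T) := by
  refine ⟨fun hnice x y S T hx hy hS hT => hnice.kcc2 hκ hmono.monotoneOn hsup hx hy hS hT,
    fun hkcc => ?_⟩
  by_contra hnice
  obtain ⟨x, hx, horth⟩ := exists_disjFinFam_orthogonal_of_not_isNice hnice
  obtain ⟨S, hS⟩ := horth.exists_xSeq (hκ.le.trans (Ordinal.cof_ord_le θ)) fun α hα =>
    lt_of_strictMonoOn_of_sSup_eq (isSuccLimit_ord hκ.le) hmono hsup hα
  exact horth.not_kcc2 hS.1 (hkcc x x S S hx hx hS hS)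

/-- Lemma 1: `(A,B)` is nice iff for all families `X, Y` of pairwise
disjoint finite subsets of `θ`, every `X`-sequence `S` and every `Y`-sequence `T`,
the product `Q(X,S) × Q(Y,T)` is `κ.c.c.` -/
theorem statement3 (θ : Cardinal.{0}) (θseq : Ordinal.{0} → Cardinal.{0})
    (a b : Ordinal.{0} → Set ℕ)
    (hκ : ℵ₀ < θ.ord.cof) (hsing : θ.ord.cof < θ)
    (hmono : ∀ α β : Ordinal, α < β → β < θ.ord.cof.ord → θseq α < θseq β)
    (hsup : sSup (θseq '' Set.Iio θ.ord.cof.ord) = θ)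
    (h0 : θ.ord.cof < θseq 0)
    (hpair : IsPair θ a b) :
    IsNice θ a b ↔
      ∀ x y S T : Ordinal.{0} → Set Ordinal.{0}, DisjFinFam θ x → DisjFinFam θ y →
        XSeq θ θseq a b x S → XSeq θ θseq a b y T →
        KCC2 θ.ord.cof (QSet θ a b x S) (QSet θ a b y T) := by
  exact statement3_general θ θseq a b hκ (fun α _ β hβ hαβ => hmono α β hαβ hβ) hsup
end

section
/- Let (A,B) be a (θ,θ) pair, and define S̃ = ⟨S̃_α : α < κ⟩ by S̃_α = [θ_α, θ_α⁺), the interval of ordinals i with θ_α ≤ i < θ_α⁺. Then (A,B) is nice if and only if for every family X = {x_u : u < θ} of pairwise disjoint finite subsets of θ such that S̃ is an X-sequence, the partial order Q(X,S̃) is κ.c.c. -/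
open Cardinal Set

/-!
Suppose `A` is an antichain of size `κ` in `Q(X, S)`. A maximality argument in the spirit of the
`Δ`-system lemma gives a finite `R` such that members `F ⊋ R` of `A` have `F \ R` as far out in `κ`
as desired. Attach to each `ξ < θ` such an `F ξ` with `ξ < θ_β` for all `β ∈ F ξ \ R`; there is then
room to pick from every `S β`, `β ∈ F ξ \ R`, an index not used for any other ordinal. Merging the
sets of `X` with the indices picked for `ξ` yields a new disjoint family, to which niceness applies.
It gives `ξ, η` such that every `α ∈ F ξ \ R` is linked to every `β ∈ F η \ R`. If `F ξ ≠ F η`, this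
makes `F ξ ∪ F η` a member of `Q(X, S)`; if `F ξ = F η`, it links some `S α` to itself. Both are
impossible.

Conversely, a family witnessing that the pair is not nice leaves no two distinct `α, β < κ` linked,
so the singletons form an antichain of size `κ`.
-/

universe u

/-- A weak root of a family `A` of finite sets: members of `A` properly extending `R` can be found
disjoint, outside `R`, from any given set of fewer than `c` points. The root of a `Δ`-system of
infinite regular size `c` has this property. -/
def IsWeakRoot {α : Type u} (c : Cardinal.{u}) (A : Set (Finset α)) (R : Finset α) : Prop :=
  ∀ D : Set α, #D < c → ∃ F ∈ A, R ⊂ F ∧ ∀ z ∈ F, z ∈ D → z ∈ R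

theorem exists_subfamily_forall_notMem_mk_lt {α : Type u} {c : Cardinal.{u}}
    (hc : ℵ₀ < c.ord.cof) {A : Set (Finset α)} (hA : c ≤ #A) :
    ∃ R : Finset α, ∃ B ⊆ A, c ≤ #B ∧ (∀ F ∈ B, R ⊆ F) ∧ ∀ z ∉ R, #{F ∈ B | z ∈ F} < c := by
  classical
  have hc₀ : ℵ₀ ≤ c := hc.le.trans (Ordinal.cof_ord_le c)
  obtain ⟨⟨n⟩, C, hCA, hcC, hcard⟩ :=
    infinite_pigeonhole_set (fun F : A => ULift.up.{u} F.1.card) c hA hc₀ (by simpa using hc)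
  have hcard' : ∀ F ∈ C, F.card = n := fun F hF => congrArg ULift.down (hcard hF)
  let roots : Set (Finset α) := {R | c ≤ #{F ∈ C | R ⊆ F}}
  have hroots : roots.Nonempty := ⟨∅, by simpa [roots] using hcC⟩
  have hbound : Finset.card '' roots ⊆ Iic n := by
    rintro _ ⟨R, hR, rfl⟩
    obtain ⟨F, hFC, hRF⟩ : {F ∈ C | R ⊆ F}.Nonempty :=
      nonempty_coe_sort.1 (mk_ne_zero_iff.1 (aleph0_pos.trans_le (hc₀.trans hR)).ne')
    exact (Finset.card_le_card hRF).trans_eq (hcard' F hFC)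
  obtain ⟨R, hR, hmax⟩ :=
    Set.Finite.exists_maximalFor' Finset.card roots ((finite_Iic n).subset hbound) hroots
  refine ⟨R, {F ∈ C | R ⊆ F}, (sep_subset _ _).trans hCA, hR, fun F hF => hF.2, fun z hz => ?_⟩
  by_contra! hlarge
  have hinsert : insert z R ∈ roots := hlarge.trans <| mk_le_mk_of_subset
    fun F hF => ⟨hF.1.1, Finset.insert_subset hF.2 hF.1.2⟩
  have hle := hmax hinsert (Finset.card_le_card (Finset.subset_insert z R))
  simp only [Finset.card_insert_of_notMem hz] at hle
  omega

theorem exists_isWeakRoot {α : Type u} {c : Cardinal.{u}} (hc : c.IsRegular) (hc₀ : ℵ₀ < c)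
    {A : Set (Finset α)} (hA : c ≤ #A) : ∃ R, IsWeakRoot c A R := by
  obtain ⟨R, B, hBA, hB, hRB, hsmall⟩ :=
    exists_subfamily_forall_notMem_mk_lt (hc.cof_ord.symm ▸ hc₀) hA
  refine ⟨R, fun D hD => ?_⟩
  have hmeet : #(⋃ z ∈ D \ R, {F ∈ B | z ∈ F}) < c :=
    (card_biUnion_lt_iff_forall_of_isRegular hc ((mk_le_mk_of_subset sdiff_subset).trans_lt hD)).2
      fun z hz => hsmall z hz.2
  have hbad : #(insert R (⋃ z ∈ D \ R, {F ∈ B | z ∈ F}) : Set (Finset α)) < c :=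
    mk_insert_le.trans_lt (add_lt_of_lt hc.aleph0_le hmeet (one_lt_aleph0.trans hc₀))
  obtain ⟨F, hFB, hF⟩ : ∃ F ∈ B, F ∉ insert R (⋃ z ∈ D \ R, {F ∈ B | z ∈ F}) := by
    by_contra! h
    exact (hB.trans (mk_le_mk_of_subset h)).not_gt hbad
  rw [mem_insert_iff, not_or] at hF
  refine ⟨F, hBA hFB, (hRB F hFB).ssubset_of_ne (Ne.symm hF.1), fun z hzF hzD => ?_⟩
  by_contra hzR
  exact hF.2 (mem_biUnion ⟨hzD, hzR⟩ ⟨hFB, hzF⟩)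

theorem IsWeakRoot.exists_forall_le {κ : Cardinal.{u}} {A : Set (Finset Ordinal.{u})}
    {R : Finset Ordinal.{u}} (hR : IsWeakRoot (lift.{u + 1} κ) A R) {α : Ordinal.{u}}
    (hα : α < κ.ord) : ∃ F ∈ A, R ⊂ F ∧ ∀ β ∈ F, β ∉ R → α ≤ β := by
  obtain ⟨F, hFA, hRF, hF⟩ := hR (Iio α) (by rwa [mk_Iio_ordinal, lift_lt, ← lt_ord])
  exact ⟨F, hFA, hRF, fun β hβ hβR => not_lt.1 fun h => hβR (hF β hβ h)⟩

theorem exists_mapsTo_injOn_of_embedding {α β : Type*} [Nonempty β] {s : Set α} {t : Set β}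
    (e : s ↪ t) : ∃ f : α → β, MapsTo f s t ∧ InjOn f s := by
  let f : α → β := Function.extend (↑) (fun i : s => (e i : β)) fun _ => Classical.arbitrary β
  have hf (i : s) : f i = e i := Subtype.val_injective.extend_apply _ _ i
  refine ⟨f, fun i hi => hf ⟨i, hi⟩ ▸ (e ⟨i, hi⟩).2, fun i hi j hj hij => ?_⟩
  rw [hf ⟨i, hi⟩, hf ⟨j, hj⟩] at hij
  exact congrArg Subtype.val (e.injective (Subtype.ext hij))

theorem lift_lt_mk_Ico_ord_succ {c : Cardinal.{u}} (hc : ℵ₀ ≤ c) :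
    lift.{u + 1} c < #(Ico c.ord (Order.succ c).ord) := by
  by_contra! h
  have hle : lift.{u + 1} (Order.succ c) ≤ lift.{u + 1} (c + c) := calc
    lift.{u + 1} (Order.succ c) = #(Iio (Order.succ c).ord) := by rw [mk_Iio_ordinal, card_ord]
    _ = #(Iio c.ord ∪ Ico c.ord (Order.succ c).ord : Set Ordinal.{u}) := by
      rw [Iio_union_Ico_eq_Iio (ord_le_ord.2 (Order.le_succ c))]
    _ ≤ #(Iio c.ord) + #(Ico c.ord (Order.succ c).ord) := mk_union_le _ _
    _ ≤ lift.{u + 1} (c + c) := by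
      rw [mk_Iio_ordinal, card_ord, lift_add]
      gcongr
  rw [lift_le, add_eq_self hc] at hle
  exact (Order.lt_succ c).not_ge hle

section

variable {θ : Cardinal.{0}} {θseq : Ordinal.{0} → Cardinal.{0}} {a b : Ordinal.{0} → Set ℕ}
  {x S : Ordinal.{0} → Set Ordinal.{0}}

/-- The part of the notion of an `X`-sequence that does not depend on `X`: the `S α`, `α < cof θ`,
are pairwise disjoint subsets of `θ` with `|S α| > θ_α`. -/
structure IsBlockSeq (θ : Cardinal.{0}) (θseq : Ordinal.{0} → Cardinal.{0})
    (S : Ordinal.{0} → Set Ordinal.{0}) : Prop where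
  subset : ∀ α < θ.ord.cof.ord, S α ⊆ Iio θ.ord
  disjoint : ∀ α < θ.ord.cof.ord, ∀ β < θ.ord.cof.ord, α ≠ β → Disjoint (S α) (S β)
  lift_lt_mk : ∀ α < θ.ord.cof.ord, lift.{1, 0} (θseq α) < #(S α)

theorem XSeq.isBlockSeq (hX : XSeq θ θseq a b x S) : IsBlockSeq θ θseq S :=
  ⟨hX.1, hX.2.1, hX.2.2.1⟩

theorem isBlockSeq_Ico (hmono : StrictMonoOn θseq (Iio θ.ord.cof.ord))
    (hinf : ∀ α < θ.ord.cof.ord, ℵ₀ ≤ θseq α) (hlt : ∀ α < θ.ord.cof.ord, θseq α < θ) :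
    IsBlockSeq θ θseq fun α => Ico (θseq α).ord (Order.succ (θseq α)).ord where
  subset α hα _ hi := hi.2.trans_le (ord_le_ord.2 (Order.succ_le_of_lt (hlt α hα)))
  disjoint := by
    intro α hα β hβ hne
    wlog hαβ : α < β generalizing α β
    · exact (this β hβ α hα hne.symm (hne.lt_or_gt.resolve_left hαβ)).symm
    exact Ico_disjoint_Ico.2 <| (min_le_left _ _).trans <|
      (ord_le_ord.2 (Order.succ_le_of_lt (hmono hα hβ hαβ))).trans (le_max_right _ _)
  lift_lt_mk α hα := lift_lt_mk_Ico_ord_succ (hinf α hα)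

/-- The relation between `α` and `β` that distinct members of each `F ∈ Q(X, S)` must satisfy. -/
def Linked (a b : Ordinal.{0} → Set ℕ) (x S : Ordinal.{0} → Set Ordinal.{0})
    (α β : Ordinal.{0}) : Prop :=
  ∃ i ∈ S α, ∃ j ∈ S β, (inters a (x i) ∩ inters b (x j)).Nonempty ∨
    (inters b (x i) ∩ inters a (x j)).Nonempty

theorem Linked.symm {α β : Ordinal.{0}} (h : Linked a b x S α β) : Linked a b x S β α := by
  obtain ⟨i, hi, j, hj, hij⟩ := h
  exact ⟨j, hj, i, hi, by
    rwa [inter_comm, inter_comm (inters b (x j)), or_comm]⟩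

theorem mem_qSet_iff {F : Finset Ordinal.{0}} :
    F ∈ QSet θ a b x S ↔
      (∀ α ∈ F, α < θ.ord.cof.ord) ∧ (F : Set Ordinal.{0}).Pairwise (Linked a b x S) :=
  Iff.rfl

theorem union_mem_qSet {F K R : Finset Ordinal.{0}} (hF : F ∈ QSet θ a b x S)
    (hK : K ∈ QSet θ a b x S) (hRF : R ⊆ F) (hRK : R ⊆ K)
    (h : ∀ α ∈ F, α ∉ R → ∀ β ∈ K, β ∉ R → Linked a b x S α β) : F ∪ K ∈ QSet θ a b x S := by
  have : Std.Symm (Linked a b x S) := ⟨fun _ _ => Linked.symm⟩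
  rw [mem_qSet_iff] at hF hK ⊢
  refine ⟨fun α hα => (Finset.mem_union.1 hα).elim (hF.1 α) (hK.1 α), ?_⟩
  rw [Finset.coe_union, pairwise_union_of_symm]
  refine ⟨hF.2, hK.2, fun α hα β hβ hne => ?_⟩
  by_cases hαR : α ∈ R
  · exact hK.2 (hRK hαR) hβ hne
  by_cases hβR : β ∈ R
  · exact hF.2 hα (hRF hβR) hne
  exact h α hα hαR β hβ hβR

theorem not_kcc_qSet_of_forall_not_linked
    (h : ∀ α < θ.ord.cof.ord, ∀ β < θ.ord.cof.ord, α ≠ β → ¬ Linked a b x S α β) :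
    ¬ KCC θ.ord.cof (QSet θ a b x S) := by
  refine not_not_intro ⟨(fun α => {α}) '' Iio θ.ord.cof.ord, ?_, ?_, ?_⟩
  · rintro _ ⟨α, hα, rfl⟩
    simpa [mem_qSet_iff] using hα
  · rintro _ ⟨α, hα, rfl⟩ _ ⟨β, hβ, rfl⟩ hne hQ
    have hαβ : α ≠ β := fun h => hne (h ▸ rfl)
    exact h α hα β hβ hαβ ((mem_qSet_iff.1 hQ).2 (by simp) (by simp) hαβ)
  · rw [mk_image_eq Finset.singleton_injective, mk_Iio_ordinal, card_ord]

theorem DisjFinFam.biUnion {I : Ordinal.{0} → Set Ordinal.{0}} (hx : DisjFinFam θ x)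
    (hI : DisjFinFam θ I) : DisjFinFam θ fun ξ => ⋃ i ∈ I ξ, x i := by
  refine ⟨fun ξ hξ => ⟨(hI.1 ξ hξ).1.biUnion fun i hi => (hx.1 i ((hI.1 ξ hξ).2 hi)).1,
    iUnion₂_subset fun i hi => (hx.1 i ((hI.1 ξ hξ).2 hi)).2⟩, fun ξ hξ η hη hne => ?_⟩
  simp only [disjoint_iUnion_left, disjoint_iUnion_right]
  exact fun j hj i hi => hx.2 i ((hI.1 ξ hξ).2 hi) j ((hI.1 η hη).2 hj)
    ((hI.2 ξ hξ η hη hne).ne_of_mem hi hj)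

theorem inters_inter_nonempty_of_biUnion {I J : Set Ordinal.{0}}
    (h : (inters a (⋃ i ∈ I, x i) ∩ inters b (⋃ j ∈ J, x j)).Nonempty) {i j : Ordinal.{0}}
    (hi : i ∈ I) (hj : j ∈ J) : (inters a (x i) ∩ inters b (x j)).Nonempty :=
  h.mono <| inter_subset_inter (biInter_subset_biInter_left (subset_biUnion_of_mem hi))
    (biInter_subset_biInter_left (subset_biUnion_of_mem hj))

theorem IsBlockSeq.exists_disjFinFam (hS : IsBlockSeq θ θseq S)
    {P : Ordinal.{0} → Finset Ordinal.{0}}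
    (hP : ∀ ξ < θ.ord, ∀ β ∈ P ξ, β < θ.ord.cof.ord ∧ ξ < (θseq β).ord) :
    ∃ I, DisjFinFam θ I ∧ ∀ ξ < θ.ord, ∀ β ∈ P ξ, (I ξ ∩ S β).Nonempty := by
  have hinj : ∀ β < θ.ord.cof.ord,
      ∃ f : Ordinal.{0} → Ordinal.{0}, MapsTo f (Iio (θseq β).ord) (S β) ∧
        InjOn f (Iio (θseq β).ord) := by
    intro β hβ
    obtain ⟨e⟩ : Nonempty (Iio (θseq β).ord ↪ S β) := by
      rw [← le_def, mk_Iio_ordinal, card_ord]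
      exact (hS.lift_lt_mk β hβ).le
    exact exists_mapsTo_injOn_of_embedding e
  choose! f hfS hf using hinj
  have hmem : ∀ ξ < θ.ord, ∀ β ∈ P ξ, f β ξ ∈ S β := fun ξ hξ β hβ =>
    hfS β (hP ξ hξ β hβ).1 (hP ξ hξ β hβ).2
  refine ⟨fun ξ => (f · ξ) '' P ξ, ⟨fun ξ hξ => ⟨(P ξ).finite_toSet.image _, ?_⟩, ?_⟩,
    fun ξ hξ β hβ => ⟨f β ξ, mem_image_of_mem _ hβ, hmem ξ hξ β hβ⟩⟩
  · rintro _ ⟨β, hβ, rfl⟩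
    exact hS.subset β (hP ξ hξ β hβ).1 (hmem ξ hξ β hβ)
  · intro ξ hξ η hη hne
    rw [disjoint_left]
    rintro _ ⟨β, hβ, rfl⟩ ⟨γ, hγ, heq : f γ η = f β ξ⟩
    obtain ⟨hβκ, hξβ⟩ := hP ξ hξ β hβ
    obtain ⟨hγκ, hηγ⟩ := hP η hη γ hγ
    obtain rfl : γ = β := by
      by_contra hγβ
      exact (hS.disjoint γ hγκ β hβκ hγβ).ne_of_mem (hmem η hη γ hγ) (hmem ξ hξ β hβ) heq
    exact hne (hf γ hγκ hξβ hηγ heq.symm)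

theorem IsNice.kcc_qSet (hnice : IsNice θ a b) (hκ : ℵ₀ < θ.ord.cof)
    (hmono : MonotoneOn θseq (Iio θ.ord.cof.ord))
    (hsup : sSup (θseq '' Iio θ.ord.cof.ord) = θ) (hx : DisjFinFam θ x)
    (hX : XSeq θ θseq a b x S) : KCC θ.ord.cof (QSet θ a b x S) := by
  rintro ⟨A, hAQ, hanti, hA⟩
  have hreg : θ.ord.cof.IsRegular := ⟨hκ.le, (Ordinal.cof_ord_cof _).ge⟩
  obtain ⟨R, hR⟩ := exists_isWeakRoot hreg.lift (aleph0_lt_lift.2 hκ) hA.ge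
  have hfar : ∀ ξ < θ.ord, ∃ F ∈ A, R ⊂ F ∧ ∀ β ∈ F, β ∉ R → ξ < (θseq β).ord := by
    intro ξ hξ
    obtain ⟨_, ⟨α, hα, rfl⟩, hξα⟩ := exists_lt_of_lt_csSup' (hsup.symm ▸ lt_ord.1 hξ)
    obtain ⟨F, hFA, hRF, hF⟩ := hR.exists_forall_le hα
    exact ⟨F, hFA, hRF, fun β hβ hβR =>
      lt_ord.2 (hξα.trans_le (hmono hα ((hAQ hFA).1 β hβ) (hF β hβ hβR)))⟩
  choose! F hFA hRF hF using hfar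
  have hFκ : ∀ ξ < θ.ord, ∀ β ∈ F ξ, β < θ.ord.cof.ord := fun ξ hξ => (hAQ (hFA ξ hξ)).1
  obtain ⟨I, hI, hIS⟩ := hX.isBlockSeq.exists_disjFinFam (P := fun ξ => F ξ \ R)
    fun ξ hξ β hβ => by
      obtain ⟨hβF, hβR⟩ := Finset.mem_sdiff.1 hβ
      exact ⟨hFκ ξ hξ β hβF, hF ξ hξ β hβF hβR⟩
  obtain ⟨ξ, hξ, η, hη, hne⟩ := hnice _ (hx.biUnion hI)
  have hcross : ∀ α ∈ F ξ, α ∉ R → ∀ β ∈ F η, β ∉ R →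
      ∃ i ∈ S α, ∃ j ∈ S β, (inters a (x i) ∩ inters b (x j)).Nonempty := by
    intro α hα hαR β hβ hβR
    obtain ⟨i, hiI, hiS⟩ := hIS ξ hξ α (Finset.mem_sdiff.2 ⟨hα, hαR⟩)
    obtain ⟨j, hjI, hjS⟩ := hIS η hη β (Finset.mem_sdiff.2 ⟨hβ, hβR⟩)
    exact ⟨i, hiS, j, hjS, inters_inter_nonempty_of_biUnion hne hiI hjI⟩
  by_cases hFF : F ξ = F η
  · obtain ⟨α, hα, hαR⟩ := Finset.exists_of_ssubset (hRF ξ hξ)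
    obtain ⟨i, hi, j, hj, hij⟩ := hcross α hα hαR α (hFF ▸ hα) hαR
    exact hij.ne_empty (hX.2.2.2 α (hFκ ξ hξ α hα) i hi j hj)
  · refine hanti _ (hFA ξ hξ) _ (hFA η hη) hFF <| union_mem_qSet (hAQ (hFA ξ hξ))
      (hAQ (hFA η hη)) (hRF ξ hξ).subset (hRF η hη).subset fun α hα hαR β hβ hβR => ?_
    obtain ⟨i, hi, j, hj, hij⟩ := hcross α hα hαR β hβ hβR
    exact ⟨i, hi, j, hj, Or.inl hij⟩

theorem IsBlockSeq.isNice_of_forall_kcc (hS : IsBlockSeq θ θseq S)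
    (h : ∀ x, DisjFinFam θ x → XSeq θ θseq a b x S → KCC θ.ord.cof (QSet θ a b x S)) :
    IsNice θ a b := by
  intro x hx
  by_contra! hempty
  refine not_kcc_qSet_of_forall_not_linked ?_ (h x hx ⟨hS.subset, hS.disjoint, hS.lift_lt_mk,
    fun α hα i hi j hj => hempty i (hS.subset α hα hi) j (hS.subset α hα hj)⟩)
  rintro α hα β hβ - ⟨i, hi, j, hj, hij | hij⟩
  · exact hij.ne_empty (hempty i (hS.subset α hα hi) j (hS.subset β hβ hj))
  · rw [inter_comm] at hij
    exact hij.ne_empty (hempty j (hS.subset β hβ hj) i (hS.subset α hα hi))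

theorem statement6_general (hκ : ℵ₀ < θ.ord.cof) (hmono : MonotoneOn θseq (Iio θ.ord.cof.ord))
    (hsup : sSup (θseq '' Iio θ.ord.cof.ord) = θ) (hS : IsBlockSeq θ θseq S) :
    IsNice θ a b ↔
      ∀ x, DisjFinFam θ x → XSeq θ θseq a b x S → KCC θ.ord.cof (QSet θ a b x S) :=
  ⟨fun hnice _ hx hX => hnice.kcc_qSet hκ hmono hsup hx hX, hS.isNice_of_forall_kcc⟩

end

/-- with `S̃ α = [θ_α, θ_α⁺)` (ordinal interval up to the cardinal
successor of `θ_α`), the pair `(A,B)` is nice iff for every family `X` of pairwise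
disjoint finite subsets of `θ` such that `S̃` is an `X`-sequence, `Q(X,S̃)` is
`κ.c.c.` -/
theorem statement6 (θ : Cardinal.{0}) (θseq : Ordinal.{0} → Cardinal.{0})
    (a b : Ordinal.{0} → Set ℕ)
    (hκ : ℵ₀ < θ.ord.cof) (hsing : θ.ord.cof < θ)
    (hmono : ∀ α β : Ordinal, α < β → β < θ.ord.cof.ord → θseq α < θseq β)
    (hsup : sSup (θseq '' Set.Iio θ.ord.cof.ord) = θ)
    (h0 : θ.ord.cof < θseq 0)
    (hpair : IsPair θ a b)
    (Stilde : Ordinal.{0} → Set Ordinal.{0})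
    (hS : Stilde = fun α => Set.Ico (θseq α).ord (Order.succ (θseq α)).ord) :
    IsNice θ a b ↔
      ∀ x : Ordinal.{0} → Set Ordinal.{0}, DisjFinFam θ x →
        XSeq θ θseq a b x Stilde → KCC θ.ord.cof (QSet θ a b x Stilde) := by
  have hstrict : StrictMonoOn θseq (Iio θ.ord.cof.ord) := fun α _ β hβ hαβ => hmono α β hαβ hβ
  have hinf : ∀ α < θ.ord.cof.ord, ℵ₀ ≤ θseq α := fun α hα =>
    (hκ.trans h0).le.trans (hstrict.monotoneOn (zero_le.trans_lt hα) hα zero_le)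
  have hlt : ∀ α < θ.ord.cof.ord, θseq α < θ := fun α hα =>
    have hsucc := (isSuccLimit_ord hκ.le).succ_lt hα
    (hmono α _ (Order.lt_succ α) hsucc).trans_le
      (hsup ▸ le_csSup bddAbove_of_small (mem_image_of_mem θseq hsucc))
  subst hS
  exact statement6_general hκ hstrict.monotoneOn hsup (isBlockSeq_Ico hstrict hinf hlt)
end

section
/- Let (A,B) be a (θ,θ) pair, Y = {y_i : i < θ} a family of pairwise disjoint finite subsets of θ, and T a Y-sequence. If P' ⊆ P(Y,T) has cardinality κ and is closed under subsets (F ∈ P' and K ⊆ F imply K ∈ P'), then the product partial order P' × Q(Y,T) is not κ.c.c., where P' carries the ordering inherited from P(Y,T). -/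
open Cardinal Set

/-- The partial order `P(X,S)`: finite `F ⊆ κ` such that for all distinct
`α, β ∈ F`, for every `i ∈ S α` and `j ∈ S β`, `a(x_i) ∩ b(x_j) = ∅` and
`b(x_i) ∩ a(x_j) = ∅`. -/
def PPoset (θ : Cardinal.{0}) (a b : Ordinal.{0} → Set ℕ) (x S : Ordinal.{0} → Set Ordinal.{0}) :
    Set (Finset Ordinal.{0}) :=
  {F | (∀ α ∈ F, α < θ.ord.cof.ord) ∧
    ∀ α ∈ F, ∀ β ∈ F, α ≠ β → ∀ i ∈ S α, ∀ j ∈ S β,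
      inters a (x i) ∩ inters b (x j) = ∅ ∧ inters b (x i) ∩ inters a (x j) = ∅}

/-!
A member of `P(Y,T)` and a member of `Q(Y,T)` have at most one common element, because the
two posets impose contradictory conditions on distinct `α, β`. Hence the pairs `({α}, {α})` with
`{α} ∈ P'` are pairwise incompatible: common extensions in both coordinates would share `α` and `β`.
There are `|P'|` of them, since the members of the infinite family `P'` are finite subsets of
`{α | {α} ∈ P'}`.
-/

section FamiliesOfFinsets

variable {α : Type*} {P Q : Set (Finset α)}

/-- The vertices of a family `P` of finite sets, as in a simplicial complex: the points whose
singleton belongs to `P`. For a family closed under subsets these are the points of its members. -/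
def vertexSet (P : Set (Finset α)) : Set α := {x | {x} ∈ P}

/-- Compatibility of `F` and `K` in the poset `P` of finite sets ordered by inclusion. Neither `F`
nor `K` is required to belong to `P`. -/
def CompatibleIn (P : Set (Finset α)) (F K : Finset α) : Prop := ∃ G ∈ P, F ⊆ G ∧ K ⊆ G

/-- The diagonal copy of the vertices of `P` in the product of two posets of finite sets, which is
the antichain of the theorem. -/
def singletonPairs (P : Set (Finset α)) : Set (Finset α × Finset α) :=
  (fun x ↦ ({x}, {x})) '' vertexSet P

theorem mem_vertexSet_of_mem (hP : IsLowerSet P) {F : Finset α} (hF : F ∈ P) {x : α} (hx : x ∈ F) :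
    x ∈ vertexSet P :=
  hP (Finset.singleton_subset_iff.2 hx) hF

theorem mk_vertexSet_le (P : Set (Finset α)) : #(vertexSet P) ≤ #P :=
  mk_preimage_of_injective _ P Finset.singleton_injective

theorem subset_range_map_vertexSet (hP : IsLowerSet P) :
    P ⊆ range (Finset.map (Function.Embedding.subtype (· ∈ vertexSet P))) := by
  classical
  exact fun F hF ↦ ⟨F.subtype (· ∈ vertexSet P),
    Finset.subtype_map_of_mem fun _ ↦ mem_vertexSet_of_mem hP hF⟩

theorem infinite_vertexSet (hP : IsLowerSet P) (hinf : P.Infinite) : (vertexSet P).Infinite := by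
  intro hfin
  have := hfin.to_subtype
  exact hinf ((finite_range _).subset (subset_range_map_vertexSet hP))

theorem mk_vertexSet_eq (hP : IsLowerSet P) (hinf : P.Infinite) : #(vertexSet P) = #P := by
  have := (infinite_vertexSet hP hinf).to_subtype
  refine (mk_vertexSet_le P).antisymm ?_
  calc #P ≤ #(range (Finset.map (Function.Embedding.subtype (· ∈ vertexSet P)))) :=
        mk_le_mk_of_subset (subset_range_map_vertexSet hP)
    _ ≤ #(Finset (vertexSet P)) := mk_range_le
    _ = #(vertexSet P) := mk_finset_of_infinite _

theorem mk_singletonPairs (P : Set (Finset α)) : #(singletonPairs P) = #(vertexSet P) :=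
  mk_image_eq fun _ _ h ↦ Finset.singleton_injective (congrArg Prod.fst h)

theorem eq_of_compatibleIn_singleton
    (hPQ : ∀ F ∈ P, ∀ G ∈ Q, (F ∩ G : Set α).Subsingleton) {x y : α}
    (hP : CompatibleIn P {x} {y}) (hQ : CompatibleIn Q {x} {y}) : x = y := by
  obtain ⟨F, hF, hxF, hyF⟩ := hP
  obtain ⟨G, hG, hxG, hyG⟩ := hQ
  rw [Finset.singleton_subset_iff] at hxF hyF hxG hyG
  exact hPQ F hF G hG ⟨hxF, hxG⟩ ⟨hyF, hyG⟩

theorem pairwise_incompatible_singletonPairs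
    (hPQ : ∀ F ∈ P, ∀ G ∈ Q, (F ∩ G : Set α).Subsingleton) :
    (singletonPairs P).Pairwise
      fun p q ↦ ¬(CompatibleIn P p.1 q.1 ∧ CompatibleIn Q p.2 q.2) := by
  rintro _ ⟨x, -, rfl⟩ _ ⟨y, -, rfl⟩ hne ⟨hP, hQ⟩
  obtain rfl := eq_of_compatibleIn_singleton hPQ hP hQ
  exact hne rfl

end FamiliesOfFinsets

section LinkedAndUnlinked

variable {θ : Cardinal.{0}} {a b : Ordinal.{0} → Set ℕ} {y T : Ordinal.{0} → Set Ordinal.{0}}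

theorem subsingleton_inter_of_mem_PPoset_of_mem_QSet {F G : Finset Ordinal.{0}}
    (hF : F ∈ PPoset θ a b y T) (hG : G ∈ QSet θ a b y T) :
    (F ∩ G : Set Ordinal.{0}).Subsingleton := by
  rintro α ⟨hαF, hαG⟩ β ⟨hβF, hβG⟩
  by_contra hne
  obtain ⟨i, hi, j, hj, hlinked⟩ := hG.2 α hαG β hβG hne
  obtain ⟨hab, hba⟩ := hF.2 α hαF β hβF hne i hi j hj
  exact hlinked.elim (·.ne_empty hab) (·.ne_empty hba)

theorem singleton_mem_QSet {α : Ordinal.{0}} (hα : α < θ.ord.cof.ord) :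
    {α} ∈ QSet θ a b y T := by
  refine ⟨fun β hβ ↦ Finset.mem_singleton.1 hβ ▸ hα, fun β hβ γ hγ hne ↦ ?_⟩
  exact absurd ((Finset.mem_singleton.1 hβ).trans (Finset.mem_singleton.1 hγ).symm) hne

theorem mem_of_mem_singletonPairs {P' : Set (Finset Ordinal.{0})} (hP' : P' ⊆ PPoset θ a b y T)
    {p : Finset Ordinal.{0} × Finset Ordinal.{0}} (hp : p ∈ singletonPairs P') :
    p.1 ∈ P' ∧ p.2 ∈ QSet θ a b y T := by
  obtain ⟨α, hα, rfl⟩ := hp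
  exact ⟨hα, singleton_mem_QSet ((hP' hα).1 α (Finset.mem_singleton_self α))⟩

theorem statement8_general {P' : Set (Finset Ordinal.{0})} (hP' : P' ⊆ PPoset θ a b y T)
    (hinf : P'.Infinite) (hclosed : IsLowerSet P') :
    ∃ A : Set (Finset Ordinal.{0} × Finset Ordinal.{0}),
      (∀ p ∈ A, p.1 ∈ P' ∧ p.2 ∈ QSet θ a b y T) ∧
      A.Pairwise (fun p q ↦
        ¬(CompatibleIn P' p.1 q.1 ∧ CompatibleIn (QSet θ a b y T) p.2 q.2)) ∧
      #A = #P' :=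
  ⟨singletonPairs P', fun _ ↦ mem_of_mem_singletonPairs hP',
    pairwise_incompatible_singletonPairs fun _ hF _ hG ↦
      subsingleton_inter_of_mem_PPoset_of_mem_QSet (hP' hF) hG,
    (mk_singletonPairs P').trans (mk_vertexSet_eq hclosed hinf)⟩

end LinkedAndUnlinked

/-- if `P' ⊆ P(Y,T)` has cardinality `κ` and is closed under subsets,
then `P' × Q(Y,T)` is not `κ.c.c.`: it has an antichain of cardinality `κ`
(compatibility is coordinatewise, and means having a common superset in the
respective poset). -/
theorem statement8 (θ : Cardinal.{0}) (θseq : Ordinal.{0} → Cardinal.{0})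
    (a b : Ordinal.{0} → Set ℕ)
    (hκ : ℵ₀ < θ.ord.cof) (hsing : θ.ord.cof < θ)
    (hmono : ∀ α β : Ordinal, α < β → β < θ.ord.cof.ord → θseq α < θseq β)
    (hsup : sSup (θseq '' Set.Iio θ.ord.cof.ord) = θ)
    (h0 : θ.ord.cof < θseq 0)
    (hpair : IsPair θ a b)
    (y T : Ordinal.{0} → Set Ordinal.{0})
    (hfam : DisjFinFam θ y) (hseq : XSeq θ θseq a b y T)
    (P' : Set (Finset Ordinal.{0}))
    (hP' : P' ⊆ PPoset θ a b y T)
    (hcard : #P' = Cardinal.lift.{1,0} θ.ord.cof)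
    (hclosed : ∀ F ∈ P', ∀ K : Finset Ordinal.{0}, K ⊆ F → K ∈ P') :
    ∃ A : Set (Finset Ordinal.{0} × Finset Ordinal.{0}),
      (∀ p ∈ A, p.1 ∈ P' ∧ p.2 ∈ QSet θ a b y T) ∧
      (∀ p ∈ A, ∀ q ∈ A, p ≠ q →
        ¬((∃ G ∈ P', p.1 ⊆ G ∧ q.1 ⊆ G) ∧
          (∃ G ∈ QSet θ a b y T, p.2 ⊆ G ∧ q.2 ⊆ G))) ∧
      #A = Cardinal.lift.{1,0} θ.ord.cof := by
  have hinf : P'.Infinite := by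
    rw [← infinite_coe_iff, infinite_iff, hcard]
    exact (aleph0_lt_lift.2 hκ).le
  exact hcard ▸ statement8_general hP' hinf fun F K hKF hF ↦ hclosed F hF K hKF
end

section
/- Let (A,B) be a (θ,θ) pair and suppose X = {x_i : i < θ} is a family of θ-many pairwise disjoint nonempty finite subsets of θ such that a(x_i) ∩ b(x_j) = ∅ for all i, j < θ. Let c = ⋃_{i<θ} a(x_i). Then every family Y of pairwise disjoint nonempty finite subsets of θ that is maximal with respect to the property that a(y) ⊆ c and b(y) ∩ c = ∅ for all y ∈ Y has cardinality exactly θ, and moreover a(y) ∩ b(y') = ∅ for all y, y' ∈ Y. -/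
open Cardinal Set

/-!
Each `x i` is separated by `c` (`A (x i) ⊆ c` and `B (x i) ∩ c = ∅`), so by maximality every `x i`
meets `⋃₀ Y`. As the `x i` are pairwise disjoint, `⋃₀ Y` has at least as many points as there are
`x i`; its members being finite, an infinite number of points is only reached when `Y` itself
has that many members. Conversely, `Y` consists of disjoint nonempty sets, so it has no more
members than the ground set has points.
-/

open scoped Function

universe u v

theorem mk_le_mk_of_pairwise_disjoint_of_not_disjoint {κ ι : Type u} {x : κ → Set ι} {U : Set ι}
    (hx : Pairwise (Disjoint on x)) (hU : ∀ k, ¬Disjoint (x k) U) : #κ ≤ #U := by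
  choose f hfx hfU using fun k => not_disjoint_iff.1 (hU k)
  have hf : Function.Injective f := fun k l hkl =>
    hx.eq (not_disjoint_iff.2 ⟨f k, hfx k, hkl ▸ hfx l⟩)
  exact mk_le_of_injective (hf.codRestrict hfU)

theorem mk_sUnion_lt_of_forall_finite_s10 {ι : Type u} {Y : Set (Set ι)} {μ : Cardinal.{u}}
    (hμ : ℵ₀ ≤ μ) (hYfin : ∀ y ∈ Y, y.Finite) (hYμ : #Y < μ) : #(⋃₀ Y) < μ := by
  rcases Y.finite_or_infinite with hY | hY
  · exact (hY.sUnion hYfin).lt_aleph0.trans_le hμ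
  · have hsup : ⨆ y : Y, #y ≤ ℵ₀ := ciSup_le' fun y => (hYfin y y.2).lt_aleph0.le
    have hYinf : ℵ₀ ≤ #Y := infinite_iff.1 hY.to_subtype
    calc #(⋃₀ Y) ≤ #Y * ⨆ y : Y, #y := mk_sUnion_le Y
      _ ≤ #Y * ℵ₀ := by gcongr
      _ = #Y := mul_aleph0_eq hYinf
      _ < μ := hYμ

theorem mk_le_mk_of_forall_not_disjoint_sUnion {κ ι : Type u} [Infinite κ] {x : κ → Set ι}
    {Y : Set (Set ι)} (hx : Pairwise (Disjoint on x)) (hYfin : ∀ y ∈ Y, y.Finite)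
    (hxY : ∀ k, ¬Disjoint (x k) (⋃₀ Y)) : #κ ≤ #Y := by
  by_contra! hlt
  exact (mk_le_mk_of_pairwise_disjoint_of_not_disjoint hx hxY).not_gt
    (mk_sUnion_lt_of_forall_finite_s10 (aleph0_le_mk κ) hYfin hlt)

theorem statement10_general {κ ι : Type u} {α : Type v} [Infinite κ] {I : Set ι}
    (hκI : #I ≤ #κ) (A B : Set ι → Set α) {x : κ → Set ι}
    (hxfin : ∀ i, (x i).Finite ∧ (x i).Nonempty ∧ x i ⊆ I)
    (hxdisj : Pairwise (Disjoint on x))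
    (hempty : ∀ i j, A (x i) ∩ B (x j) = ∅)
    {c : Set α} (hc : c = ⋃ i, A (x i)) {Y : Set (Set ι)}
    (hYfin : ∀ y ∈ Y, y.Finite ∧ y.Nonempty ∧ y ⊆ I)
    (hYdisj : Y.PairwiseDisjoint id)
    (hYprop : ∀ y ∈ Y, A y ⊆ c ∧ B y ∩ c = ∅)
    (hmax : ∀ z : Set ι, z.Finite → z.Nonempty → z ⊆ I → z ∉ Y → (∀ y ∈ Y, Disjoint z y) →
      A z ⊆ c → B z ∩ c = ∅ → False) :
    #Y = #I ∧ ∀ y ∈ Y, ∀ y' ∈ Y, A y ∩ B y' = ∅ := by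
  refine ⟨le_antisymm ?_ ?_, fun y hy y' hy' => ?_⟩
  · have hYmeets (y : Y) : ¬Disjoint (y : Set ι) I := fun h =>
      (hYfin y y.2).2.1.ne_empty (h.eq_bot_of_le (hYfin y y.2).2.2)
    exact mk_le_mk_of_pairwise_disjoint_of_not_disjoint hYdisj.subtype hYmeets
  · have hxAc (i : κ) : A (x i) ⊆ c := hc ▸ subset_iUnion (fun j => A (x j)) i
    have hxBc (i : κ) : B (x i) ∩ c = ∅ := by
      rw [hc, inter_comm, iUnion_inter, iUnion_eq_empty]
      exact fun j => hempty j i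
    have hxY (i : κ) : ¬Disjoint (x i) (⋃₀ Y) := by
      intro hdisj
      obtain ⟨hfin, hne, hsub⟩ := hxfin i
      rw [disjoint_sUnion_right] at hdisj
      have hxiY : x i ∉ Y := fun hi => hne.ne_empty (disjoint_self.1 (hdisj (x i) hi))
      exact hmax (x i) hfin hne hsub hxiY hdisj (hxAc i) (hxBc i)
    exact hκI.trans
      (mk_le_mk_of_forall_not_disjoint_sUnion hxdisj (fun y hy => (hYfin y hy).1) hxY)
  · rw [inter_comm]
    exact ((disjoint_iff_inter_eq_empty.2 (hYprop y' hy').2).mono_right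
      (hYprop y hy).1).inter_eq

/-- if `X = {x_i : i < θ}` are pairwise disjoint nonempty finite
subsets of `θ` with `a(x_i) ∩ b(x_j) = ∅` for all `i, j < θ`, and
`c = ⋃_{i<θ} a(x_i)`, then every family `Y` of pairwise disjoint nonempty finite
subsets of `θ`, maximal with respect to `a(y) ⊆ c ∧ b(y) ∩ c = ∅` for all `y ∈ Y`,
has cardinality exactly `θ`, and `a(y) ∩ b(y') = ∅` for all `y, y' ∈ Y`. -/
theorem statement10 (θ : Cardinal.{0}) (a b : Ordinal.{0} → Set ℕ)
    (hκ : ℵ₀ < θ.ord.cof) (hsing : θ.ord.cof < θ)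
    (hpair : IsPair θ a b)
    (x : Ordinal.{0} → Set Ordinal.{0})
    (hfam : DisjFinFam θ x)
    (hne : ∀ i < θ.ord, (x i).Nonempty)
    (hempty : ∀ i < θ.ord, ∀ j < θ.ord, inters a (x i) ∩ inters b (x j) = ∅)
    (c : Set ℕ) (hc : c = ⋃ i ∈ Set.Iio θ.ord, inters a (x i))
    (Y : Set (Set Ordinal.{0}))
    (hYfin : ∀ y ∈ Y, Set.Finite y ∧ y.Nonempty ∧ y ⊆ Set.Iio θ.ord)
    (hYdisj : ∀ y ∈ Y, ∀ y' ∈ Y, y ≠ y' → Disjoint y y')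
    (hYprop : ∀ y ∈ Y, inters a y ⊆ c ∧ inters b y ∩ c = ∅)
    (hmax : ∀ z : Set Ordinal.{0}, Set.Finite z → z.Nonempty → z ⊆ Set.Iio θ.ord →
      z ∉ Y → (∀ y ∈ Y, Disjoint z y) → inters a z ⊆ c → inters b z ∩ c = ∅ →
      False) :
    #Y = Cardinal.lift.{1,0} θ ∧
    ∀ y ∈ Y, ∀ y' ∈ Y, inters a y ∩ inters b y' = ∅ := by
  have hcard : #(Iio θ.ord) = lift.{1, 0} θ := by rw [mk_Iio_ordinal, card_ord]
  have : Infinite (Iio θ.ord) := by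
    rw [infinite_iff, hcard, aleph0_le_lift]
    exact (hκ.trans hsing).le
  rw [← hcard]
  exact statement10_general (x := fun i : Iio θ.ord => x i) le_rfl (inters a) (inters b)
    (fun i => ⟨(hfam.1 i i.2).1, hne i i.2, (hfam.1 i i.2).2⟩)
    (fun i j hij => hfam.2 i i.2 j j.2 (Subtype.coe_injective.ne hij))
    (fun i j => hempty i i.2 j j.2) (hc.trans (biUnion_eq_iUnion _ _)) hYfin
    (fun y hy y' hy' => hYdisj y hy y' hy') hYprop hmax
end

section
/- Let {p_i : i < θ} be a family of conditions in 𝒫 and let {y_i : i < θ} be a family of pairwise disjoint finite subsets of θ with y_i ⊆ s_{p_i} for every i < θ. Then there exist i ≠ j < θ, a condition q ∈ 𝒫 with q ≤ p_i and q ≤ p_j, and a natural number n < n_q such that ⟨n,ξ⟩ ∈ a_q for every ξ ∈ y_i and ⟨n,η⟩ ∈ b_q for every η ∈ y_j. -/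
open Cardinal Set

/-- A condition `p = ⟨n_p, s_p, a_p, b_p, Z_p, ⟨c_p^z : z ∈ Z_p⟩⟩` of the partial
order `𝒫`. -/
structure PCond (θ : Cardinal.{0}) where
  /-- `n_p ∈ ω` -/
  n : ℕ
  /-- `s_p`, a finite subset of `θ` -/
  s : Set Ordinal.{0}
  /-- `a_p ⊆ n_p × s_p` -/
  a : Set (ℕ × Ordinal.{0})
  /-- `b_p ⊆ n_p × s_p` -/
  b : Set (ℕ × Ordinal.{0})
  /-- `Z_p`, a finite set of subsets of `θ`, each of cardinality `≤ ℵ₁` -/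
  Z : Set (Set Ordinal.{0})
  /-- `⟨c_p^z : z ∈ Z_p⟩` with `c_p^z ⊆ n_p` -/
  c : Set Ordinal.{0} → Set ℕ
  s_fin : s.Finite
  s_sub : s ⊆ Set.Iio θ.ord
  a_sub : a ⊆ Set.Iio n ×ˢ s
  b_sub : b ⊆ Set.Iio n ×ˢ s
  ab_disj : a ∩ b = ∅
  Z_fin : Z.Finite
  Z_sub : ∀ z ∈ Z, z ⊆ Set.Iio θ.ord ∧ #z ≤ Cardinal.aleph 1
  c_sub : ∀ z ∈ Z, c z ⊆ Set.Iio n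

/-- The ordering of `𝒫`:  `q ≤ p` iff conditions (1)–(5) hold. -/
def PLe (θ : Cardinal.{0}) (q p : PCond θ) : Prop :=
  (p.s ⊆ q.s ∧ p.n ≤ q.n ∧ p.Z ⊆ q.Z) ∧
  (q.a ∩ Set.Iio p.n ×ˢ p.s = p.a ∧ q.b ∩ Set.Iio p.n ×ˢ p.s = p.b) ∧
  (∀ z ∈ p.Z, q.c z ∩ Set.Iio p.n = p.c z) ∧
  (∀ ξ ∈ p.s, ∀ η ∈ p.s, ∀ l : ℕ, p.n ≤ l → l < q.n →
    (l, ξ) ∈ q.a → (l, η) ∉ q.b) ∧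
  (∀ z ∈ p.Z, ∀ ξ ∈ z ∩ p.s, ∀ l : ℕ, p.n ≤ l → l < q.n →
    ((l, ξ) ∈ q.a → l ∈ q.c z) ∧ ((l, ξ) ∈ q.b → l ∉ q.c z))

/-!
Thin out the family to more than `ℵ₁` indices along which both the sets `s_p` and the sets `Z_p`
form Δ-systems, and fix a condition `p_k` of the thinned family; it contains both roots. At most
`ℵ₁` ordinals occur in `p_k`, as points of `s_{p_k}` or as members of the sets in `Z_{p_k}`, so all
but `ℵ₁` of the pairwise disjoint sets `y_i` avoid them. A condition has only countably many
possible traces on `s_{p_k}` and `Z_{p_k}`, so two of the remaining conditions `p_i` and `p_j` have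
the same trace, and their union is a condition. On one new level on top of it put `y_i` into `a` and
`y_j` into `b`; this violates neither (4) nor (5), because `y_i` and `y_j` miss the common part of
`s_{p_i}` and `s_{p_j}`, and `y_i` is disjoint from every `z ∈ Z_{p_i} ∩ Z_{p_j}`.
-/

universe u v

section DeltaSystem

variable {ι : Type u} {α : Type v} {κ : Cardinal.{u}} {A : ι → Set α} {I : Set ι}

/-- The subfamily of `A` indexed by `J` is a Δ-system with root `R`: any two members with distinct
indices meet exactly in `R`. Repeated members are allowed, and then equal the root. -/
def IsDeltaSystem (A : ι → Set α) (J : Set ι) (R : Set α) : Prop :=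
  J.Pairwise fun i j => A i ∩ A j = R

lemma IsDeltaSystem.mono {J K : Set ι} {R : Set α} (h : IsDeltaSystem A J R) (hKJ : K ⊆ J) :
    IsDeltaSystem A K R :=
  Set.Pairwise.mono hKJ h

lemma IsDeltaSystem.root_subset {J : Set ι} {R : Set α} (h : IsDeltaSystem A J R)
    (hJ : J.Nontrivial) {i : ι} (hi : i ∈ J) : R ⊆ A i := by
  obtain ⟨j, hj, hji⟩ := hJ.exists_ne i
  exact h hi hj hji.symm ▸ inter_subset_left

lemma IsDeltaSystem.of_sdiff_singleton {J : Set ι} {R : Set α} {x : α}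
    (h : IsDeltaSystem (fun i => A i \ {x}) J R) (hx : ∀ i ∈ J, x ∈ A i) :
    IsDeltaSystem A J (insert x R) := by
  intro i hi j hj hij
  rw [← h hi hj hij, insert_inter_distrib, insert_sdiff_singleton, insert_sdiff_singleton,
    insert_eq_of_mem (hx i hi), insert_eq_of_mem (hx j hj)]

lemma mk_biUnion_lt_of_finite (hκ : ℵ₀ ≤ κ) {s : Set α} (hs : s.Finite) {t : α → Set ι}
    (ht : ∀ x ∈ s, #(t x) < κ) : #(⋃ x ∈ s, t x : Set ι) < κ := by
  induction s, hs using Set.Finite.induction_on with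
  | empty => simpa using aleph0_pos.trans_le hκ
  | @insert x s _ _ ih =>
    rw [biUnion_insert]
    exact (mk_union_le _ _).trans_lt <| add_lt_of_lt hκ (ht x (mem_insert x s)) <|
      ih fun y hy => ht y (mem_insert_of_mem x hy)

lemma exists_maximal_pairwiseDisjoint (A : ι → Set α) (I : Set ι) :
    ∃ J, Maximal (fun J => J ⊆ I ∧ J.PairwiseDisjoint A) J := by
  refine zorn_subset {J | J ⊆ I ∧ J.PairwiseDisjoint A} fun c hc hchain => ?_
  refine ⟨⋃₀ c, ⟨sUnion_subset fun J hJ => (hc hJ).1, ?_⟩, fun J hJ => subset_sUnion_of_mem hJ⟩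
  exact (pairwise_sUnion hchain.directedOn).2 fun J hJ => (hc hJ).2

lemma subset_biUnion_of_maximal_pairwiseDisjoint {J : Set ι}
    (hJ : Maximal (fun J => J ⊆ I ∧ J.PairwiseDisjoint A) J) :
    I ⊆ J ∪ ⋃ j ∈ J, ⋃ x ∈ A j, {i ∈ I | x ∈ A i} := by
  intro i hi
  by_contra hiU
  simp only [mem_union, mem_iUnion, mem_ofPred_eq, not_or, not_exists, not_and] at hiU
  obtain ⟨hiJ, hmeet⟩ := hiU
  have hins : (insert i J).PairwiseDisjoint A :=
    hJ.prop.2.insert fun j hj _ => disjoint_right.2 fun x hxj => hmeet j hj x hxj hi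
  exact hiJ (hJ.le_of_ge ⟨insert_subset hi hJ.prop.1, hins⟩ (subset_insert i J) (mem_insert i J))

lemma exists_pairwiseDisjoint_of_forall_mk_fiber_lt (hκ : κ.IsRegular)
    (hA : ∀ i ∈ I, (A i).Finite) (hI : κ ≤ #I) (hfiber : ∀ x, #{i ∈ I | x ∈ A i} < κ) :
    ∃ J ⊆ I, κ ≤ #J ∧ J.PairwiseDisjoint A := by
  obtain ⟨J, hJ⟩ := exists_maximal_pairwiseDisjoint A I
  refine ⟨J, hJ.prop.1, le_of_not_gt fun hJκ => hI.not_gt ?_, hJ.prop.2⟩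
  have hmeet : #(⋃ j ∈ J, ⋃ x ∈ A j, {i ∈ I | x ∈ A i} : Set ι) < κ :=
    (card_biUnion_lt_iff_forall_of_isRegular hκ hJκ).2 fun j hj =>
      mk_biUnion_lt_of_finite hκ.aleph0_le (hA j (hJ.prop.1 hj)) fun x _ => hfiber x
  exact (mk_le_mk_of_subset (subset_biUnion_of_maximal_pairwiseDisjoint hJ)).trans_lt <|
    (mk_union_le _ _).trans_lt <| add_lt_of_lt hκ.aleph0_le hJκ hmeet

lemma exists_isDeltaSystem_of_encard_eq (hκ : κ.IsRegular) (k : ℕ) (hI : κ ≤ #I)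
    (hA : ∀ i ∈ I, (A i).encard = k) : ∃ J ⊆ I, κ ≤ #J ∧ ∃ R, IsDeltaSystem A J R := by
  induction k generalizing A I with
  | zero =>
    have hempty : ∀ i ∈ I, A i = ∅ := by simpa using hA
    exact ⟨I, Subset.rfl, hI, ∅, fun i hi j _ _ => by
      simp only [hempty i hi, empty_inter]⟩
  | succ k ih =>
    by_cases hfiber : ∃ x, κ ≤ #{i ∈ I | x ∈ A i}
    · obtain ⟨x, hx⟩ := hfiber
      obtain ⟨J, hJ, hκJ, R, hR⟩ := ih (A := fun i => A i \ {x}) hx fun i hi => by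
        rw [encard_sdiff_singleton_of_mem hi.2, hA i hi.1]
        norm_cast
      exact ⟨J, hJ.trans (sep_subset _ _), hκJ, insert x R,
        hR.of_sdiff_singleton fun i hi => (hJ hi).2⟩
    · push Not at hfiber
      obtain ⟨J, hJ, hκJ, hdisj⟩ := exists_pairwiseDisjoint_of_forall_mk_fiber_lt hκ
        (fun i hi => finite_of_encard_eq_coe (hA i hi)) hI hfiber
      exact ⟨J, hJ, hκJ, ∅, hdisj.imp fun _ _ => Disjoint.inter_eq⟩

theorem exists_isDeltaSystem (hκ : κ.IsRegular) (hκ' : ℵ₀ < κ) (hI : κ ≤ #I)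
    (hA : ∀ i ∈ I, (A i).Finite) : ∃ J ⊆ I, κ ≤ #J ∧ ∃ R, IsDeltaSystem A J R := by
  have hℕ : #(ULift.{u} ℕ) < κ.ord.cof := by simpa [hκ.cof_ord] using hκ'
  obtain ⟨⟨k⟩, I', hI', hκI', hk⟩ := infinite_pigeonhole_set
    (fun i : I => ULift.up.{u} (A i).ncard) κ hI hκ.aleph0_le hℕ
  obtain ⟨J, hJ, h⟩ := exists_isDeltaSystem_of_encard_eq hκ k hκI' fun i hi => by
    rw [← (hA i (hI' hi)).cast_ncard_eq]
    exact congrArg (fun n => (n.down : ℕ∞)) (hk hi)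
  exact ⟨J, hJ.trans hI', h⟩

end DeltaSystem

section Pigeonhole

variable {ι : Type u} {α : Type v}

lemma lift_mk_setOf_not_disjoint_le {y : ι → Set α} (hy : Pairwise (Function.onFun Disjoint y))
    (B : Set α) : lift.{v} #{i | ¬ Disjoint (y i) B} ≤ lift.{u} #B := by
  choose f hfy hfB using fun i : {i | ¬ Disjoint (y i) B} => not_disjoint_iff.1 i.2
  refine lift_mk_le_lift_mk_of_injective (f := fun i => (⟨f i, hfB i⟩ : B)) fun i j hij => ?_
  by_contra hne
  have hfij : f i = f j := congrArg Subtype.val hij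
  exact disjoint_left.1 (hy (Subtype.coe_ne_coe.2 hne)) (hfy i) (hfij ▸ hfy j)

lemma lt_mk_setOf_disjoint {y : ι → Set α} (hy : Pairwise (Function.onFun Disjoint y))
    {μ : Cardinal.{u}} (hμ : ℵ₀ ≤ μ) {J : Set ι} (hJ : μ < #J) {B : Set α}
    (hB : lift.{u} #B ≤ lift.{v} μ) : μ < #{i ∈ J | Disjoint (y i) B} := by
  have hmeet : #{i | ¬ Disjoint (y i) B} ≤ μ :=
    lift_le.1 ((lift_mk_setOf_not_disjoint_le hy B).trans hB)
  have hcover : J ⊆ {i ∈ J | Disjoint (y i) B} ∪ {i | ¬ Disjoint (y i) B} := fun i hi =>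
    (em _).imp (⟨hi, ·⟩) id
  by_contra! hle
  exact hJ.not_ge <| (mk_le_mk_of_subset hcover).trans <| (mk_union_le _ _).trans <|
    (add_le_add hle hmeet).trans (add_eq_self hμ).le

lemma exists_ne_map_eq_of_not_countable {f : ι → α} {J : Set ι} (hJ : ¬ J.Countable)
    (hf : (range f).Countable) : ∃ i ∈ J, ∃ j ∈ J, i ≠ j ∧ f i = f j := by
  by_contra! h
  have hinj : InjOn f J := fun i hi j hj hij => by_contra fun hne => h i hi j hj hne hij
  exact hJ <| MapsTo.countable_of_injOn (fun i _ => mem_range_self i) hinj hf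

end Pigeonhole

namespace PCond

variable {θ : Cardinal.{0}} {p q r : PCond θ}

lemma disjoint_a_b (p : PCond θ) : Disjoint p.a p.b :=
  disjoint_iff_inter_eq_empty.2 p.ab_disj

section AddLevel

variable {y w : Set Ordinal.{0}} {C : Set (Set Ordinal.{0})}

/-- The condition `q` with one more level `n_q` on top, at which the points of `y` are put into
`a`, those of `w` into `b`, and `n_q` is put into `c^z` exactly for `z ∈ C`. -/
def addLevel (q : PCond θ) (hy : y ⊆ q.s) (hw : w ⊆ q.s) (hyw : Disjoint y w)
    (C : Set (Set Ordinal.{0})) : PCond θ where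
  n := q.n + 1
  s := q.s
  a := q.a ∪ {q.n} ×ˢ y
  b := q.b ∪ {q.n} ×ˢ w
  Z := q.Z
  c z := q.c z ∪ {l | l = q.n ∧ z ∈ C}
  s_fin := q.s_fin
  s_sub := q.s_sub
  a_sub := union_subset (q.a_sub.trans (prod_mono_left (Iio_subset_Iio (Nat.le_succ _))))
    (prod_mono (singleton_subset_iff.2 (mem_Iio.2 (lt_add_one _))) hy)
  b_sub := union_subset (q.b_sub.trans (prod_mono_left (Iio_subset_Iio (Nat.le_succ _))))
    (prod_mono (singleton_subset_iff.2 (mem_Iio.2 (lt_add_one _))) hw)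
  ab_disj := by
    have hlevel (t : Set Ordinal.{0}) : Disjoint (Iio q.n ×ˢ q.s) ({q.n} ×ˢ t) :=
      Disjoint.set_prod_left (disjoint_singleton_right.2 self_notMem_Iio) _ _
    exact disjoint_iff_inter_eq_empty.1 <| disjoint_union_left.2
      ⟨disjoint_union_right.2 ⟨q.disjoint_a_b, (hlevel w).mono_left q.a_sub⟩,
        disjoint_union_right.2 ⟨((hlevel y).mono_left q.b_sub).symm, hyw.set_prod_right _ _⟩⟩
  Z_fin := q.Z_fin
  Z_sub := q.Z_sub
  c_sub z hz := union_subset ((q.c_sub z hz).trans (Iio_subset_Iio (Nat.le_succ _)))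
    fun _ hl => hl.1 ▸ Nat.lt_succ_self q.n

variable {hy : y ⊆ q.s} {hw : w ⊆ q.s} {hyw : Disjoint y w}

lemma mem_addLevel_a_top {ξ : Ordinal.{0}} :
    (q.n, ξ) ∈ (q.addLevel hy hw hyw C).a ↔ ξ ∈ y := by
  have hq : (q.n, ξ) ∉ q.a := fun h => self_notMem_Iio (q.a_sub h).1
  simp [addLevel, hq]

lemma mem_addLevel_b_top {ξ : Ordinal.{0}} :
    (q.n, ξ) ∈ (q.addLevel hy hw hyw C).b ↔ ξ ∈ w := by
  have hq : (q.n, ξ) ∉ q.b := fun h => self_notMem_Iio (q.b_sub h).1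
  simp [addLevel, hq]

lemma mem_addLevel_c_top {z : Set Ordinal.{0}} (hz : z ∈ q.Z) :
    q.n ∈ (q.addLevel hy hw hyw C).c z ↔ z ∈ C := by
  have hq : q.n ∉ q.c z := fun h => self_notMem_Iio (q.c_sub z hz h)
  simp [addLevel, hq]

lemma addLevel_le (hqp : PLe θ q p) (hn : p.n = q.n)
    (hab : ∀ ξ ∈ p.s, ∀ η ∈ p.s, ξ ∈ y → η ∉ w)
    (hC : ∀ z ∈ p.Z, ∀ ξ ∈ z ∩ p.s, (ξ ∈ y → z ∈ C) ∧ (ξ ∈ w → z ∉ C)) :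
    PLe θ (q.addLevel hy hw hyw C) p := by
  obtain ⟨⟨hs, -, hZ⟩, ⟨ha, hb⟩, hc, -, -⟩ := hqp
  have eq_top {l : ℕ} (hl : p.n ≤ l) (hl' : l < q.n + 1) : l = q.n := by lia
  have hlevel (t : Set Ordinal.{0}) : ({q.n} ×ˢ t) ∩ Iio p.n ×ˢ p.s = ∅ := by
    rw [hn, prod_inter_prod, singleton_inter_eq_empty.2 self_notMem_Iio, empty_prod]
  refine ⟨⟨hs, hn.le.trans (Nat.le_succ q.n), hZ⟩, ⟨?_, ?_⟩, fun z hz => ?_, ?_, ?_⟩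
  · exact (union_inter_distrib_right _ _ _).trans (by rw [hlevel, union_empty, ha])
  · exact (union_inter_distrib_right _ _ _).trans (by rw [hlevel, union_empty, hb])
  · have hlevel_c : {l | l = q.n ∧ z ∈ C} ∩ Iio p.n = ∅ :=
      eq_empty_of_forall_notMem fun l hl => (hl.2.trans_eq hn).ne hl.1.1
    exact (union_inter_distrib_right _ _ _).trans (by rw [hlevel_c, union_empty, hc z hz])
  · intro ξ hξ η hη l hl hl'
    rw [eq_top hl hl', mem_addLevel_a_top, mem_addLevel_b_top]
    exact hab ξ hξ η hη
  · intro z hz ξ hξ l hl hl'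
    rw [eq_top hl hl', mem_addLevel_a_top, mem_addLevel_b_top, mem_addLevel_c_top (hZ hz)]
    exact hC z hz ξ hξ

end AddLevel

/-- `p` and `r` have the same height and carry the same information about the points of
`s_p ∩ s_r` and the sets of `Z_p ∩ Z_r`, so that their union is again a condition. -/
structure Coherent (p r : PCond θ) : Prop where
  n_eq : p.n = r.n
  mem_a_iff : ∀ l, ∀ ξ ∈ p.s ∩ r.s, (l, ξ) ∈ p.a ↔ (l, ξ) ∈ r.a
  mem_b_iff : ∀ l, ∀ ξ ∈ p.s ∩ r.s, (l, ξ) ∈ p.b ↔ (l, ξ) ∈ r.b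
  c_eq : ∀ z ∈ p.Z ∩ r.Z, p.c z = r.c z

namespace Coherent

lemma symm (h : Coherent p r) : Coherent r p where
  n_eq := h.n_eq.symm
  mem_a_iff l ξ hξ := (h.mem_a_iff l ξ hξ.symm).symm
  mem_b_iff l ξ hξ := (h.mem_b_iff l ξ hξ.symm).symm
  c_eq z hz := (h.c_eq z hz.symm).symm

lemma disjoint_a_b (h : Coherent p r) : Disjoint p.a r.b := by
  refine disjoint_left.2 fun ⟨l, ξ⟩ ha hb => ?_
  have hξ : ξ ∈ p.s ∩ r.s := ⟨(p.a_sub ha).2, (r.b_sub hb).2⟩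
  exact r.disjoint_a_b.notMem_of_mem_left ((h.mem_a_iff l ξ hξ).1 ha) hb

/-- The componentwise union of two coherent conditions. The clauses `z ∈ Z` in `c` discard the
junk values of `c_p^z` for `z ∉ Z_p`. -/
def union (h : Coherent p r) : PCond θ where
  n := p.n
  s := p.s ∪ r.s
  a := p.a ∪ r.a
  b := p.b ∪ r.b
  Z := p.Z ∪ r.Z
  c z := {l | z ∈ p.Z ∧ l ∈ p.c z ∨ z ∈ r.Z ∧ l ∈ r.c z}
  s_fin := p.s_fin.union r.s_fin
  s_sub := union_subset p.s_sub r.s_sub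
  a_sub := union_subset (p.a_sub.trans (prod_mono_right subset_union_left))
    (r.a_sub.trans (prod_mono (Iio_subset_Iio h.n_eq.ge) subset_union_right))
  b_sub := union_subset (p.b_sub.trans (prod_mono_right subset_union_left))
    (r.b_sub.trans (prod_mono (Iio_subset_Iio h.n_eq.ge) subset_union_right))
  ab_disj := disjoint_iff_inter_eq_empty.1 <| disjoint_union_left.2
    ⟨disjoint_union_right.2 ⟨p.disjoint_a_b, h.disjoint_a_b⟩,
      disjoint_union_right.2 ⟨h.symm.disjoint_a_b, r.disjoint_a_b⟩⟩
  Z_fin := p.Z_fin.union r.Z_fin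
  Z_sub z hz := hz.elim (p.Z_sub z) (r.Z_sub z)
  c_sub := by
    rintro z - l (⟨hz, hl⟩ | ⟨hz, hl⟩)
    · exact p.c_sub z hz hl
    · exact h.n_eq ▸ r.c_sub z hz hl

lemma union_symm (h : Coherent p r) : h.symm.union = h.union := by
  simp only [union, h.n_eq, union_comm, or_comm]

lemma union_le_left (h : Coherent p r) : PLe θ h.union p := by
  refine ⟨⟨subset_union_left, le_rfl, subset_union_left⟩, ⟨?_, ?_⟩, fun z hz => ?_,
    fun _ _ _ _ l hl hl' => absurd hl' hl.not_gt, fun _ _ _ _ l hl hl' => absurd hl' hl.not_gt⟩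
  · refine Subset.antisymm ?_ fun x hx => ⟨.inl hx, p.a_sub hx⟩
    rintro ⟨l, ξ⟩ ⟨hp | hr, -, hξ⟩
    · exact hp
    · exact (h.mem_a_iff l ξ ⟨hξ, (r.a_sub hr).2⟩).2 hr
  · refine Subset.antisymm ?_ fun x hx => ⟨.inl hx, p.b_sub hx⟩
    rintro ⟨l, ξ⟩ ⟨hp | hr, -, hξ⟩
    · exact hp
    · exact (h.mem_b_iff l ξ ⟨hξ, (r.b_sub hr).2⟩).2 hr
  · refine Subset.antisymm ?_ fun l hl => ⟨.inl ⟨hz, hl⟩, p.c_sub z hz hl⟩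
    rintro l ⟨⟨-, hp⟩ | ⟨hzr, hr⟩, -⟩
    · exact hp
    · exact h.c_eq z ⟨hz, hzr⟩ ▸ hr

lemma union_le_right (h : Coherent p r) : PLe θ h.union r :=
  h.union_symm ▸ h.symm.union_le_left

theorem exists_common_extension (h : Coherent p r) {y w : Set Ordinal.{0}} (hy : y ⊆ p.s \ r.s)
    (hw : w ⊆ r.s \ p.s) (hyZ : ∀ z ∈ p.Z ∩ r.Z, Disjoint y z) :
    ∃ q : PCond θ, PLe θ q p ∧ PLe θ q r ∧
      ∃ n < q.n, (∀ ξ ∈ y, (n, ξ) ∈ q.a) ∧ ∀ η ∈ w, (n, η) ∈ q.b := by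
  have hyw : Disjoint y w := disjoint_left.2 fun ξ hξy hξw => (hw hξw).2 (hy hξy).1
  have hys : y ⊆ h.union.s := fun ξ hξ => .inl (hy hξ).1
  have hws : w ⊆ h.union.s := fun η hη => .inr (hw hη).1
  -- The new level enters `c^z` for `z ∈ Z_p \ Z_r`: `p` allows it since `w` misses `s_p`, and it
  -- must stay out of `c^z` for `z ∈ Z_r`, which may meet `w`.
  refine ⟨h.union.addLevel hys hws hyw r.Zᶜ, addLevel_le h.union_le_left rfl ?_ ?_,
    addLevel_le h.union_le_right h.n_eq.symm ?_ ?_, h.union.n, lt_add_one h.union.n,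
    fun ξ => mem_addLevel_a_top.2, fun η => mem_addLevel_b_top.2⟩
  · exact fun _ _ η hη _ hηw => (hw hηw).2 hη
  · exact fun z hzp ξ hξ => ⟨fun hξy hzr => disjoint_left.1 (hyZ z ⟨hzp, hzr⟩) hξy hξ.1,
      fun hξw => absurd hξ.2 (hw hξw).2⟩
  · exact fun ξ hξ _ _ hξy => absurd hξ (hy hξy).2
  · exact fun z hzr ξ hξ => ⟨fun hξy => absurd hξ.2 (hy hξy).2, fun _ hzC => hzC hzr⟩

end Coherent

/-- The part of `p` that concerns the points of `S` and the sets of `T`, together with the height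
of `p`; the sets `c_p^z` are coded by pairs `(l, z)` with `l ∈ c_p^z`. -/
def trace (S : Set Ordinal.{0}) (T : Set (Set Ordinal.{0})) (p : PCond θ) :
    ℕ × Set (ℕ × Ordinal.{0}) × Set (ℕ × Ordinal.{0}) × Set (ℕ × Set Ordinal.{0}) :=
  (p.n, {x ∈ p.a | x.2 ∈ S}, {x ∈ p.b | x.2 ∈ S}, {x | x.2 ∈ T ∩ p.Z ∧ x.1 ∈ p.c x.2})

variable {S : Set Ordinal.{0}} {T : Set (Set Ordinal.{0})}

lemma coherent_of_trace_eq (h : p.trace S T = r.trace S T) (hS : p.s ∩ r.s ⊆ S)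
    (hT : p.Z ∩ r.Z ⊆ T) : Coherent p r := by
  simp only [trace, Prod.mk.injEq, Set.ext_iff, Prod.forall, mem_inter_iff, mem_ofPred_eq,
    and_congr_left_iff] at h
  obtain ⟨hn, ha, hb, hc⟩ := h
  refine ⟨hn, fun l ξ hξ => ha l ξ (hS hξ), fun l ξ hξ => hb l ξ (hS hξ), fun z hz => ?_⟩
  ext l
  simpa only [hT hz, hz.1, hz.2, true_and] using hc l z

lemma countable_range_trace (hS : S.Countable) (hT : T.Countable) :
    (range (trace S T : PCond θ → _)).Countable := by
  have hfin {β : Type 1} {X : Set β} (hX : X.Countable) :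
      {t : Set (ℕ × β) | t.Finite ∧ t ⊆ Set.univ ×ˢ X}.Countable :=
    countable_ofPred_finite_subset (countable_univ.prod hX)
  refine (countable_univ.prod ((hfin hS).prod ((hfin hS).prod (hfin hT)))).mono ?_
  rintro _ ⟨p, rfl⟩
  have ha : p.a.Finite := ((finite_Iio _).prod p.s_fin).subset p.a_sub
  have hb : p.b.Finite := ((finite_Iio _).prod p.s_fin).subset p.b_sub
  have hc : {x : ℕ × Set Ordinal.{0} | x.2 ∈ T ∩ p.Z ∧ x.1 ∈ p.c x.2}.Finite :=
    ((finite_Iio p.n).prod p.Z_fin).subset fun x hx => ⟨p.c_sub _ hx.1.2 hx.2, hx.1.2⟩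
  exact ⟨mem_univ _, ⟨ha.subset (sep_subset _ _), fun x hx => ⟨mem_univ _, hx.2⟩⟩,
    ⟨hb.subset (sep_subset _ _), fun x hx => ⟨mem_univ _, hx.2⟩⟩,
    ⟨hc, fun x hx => ⟨mem_univ _, hx.1.1⟩⟩⟩

/-- The ordinals a condition mentions: the points of `s_p` and the members of the sets in `Z_p`. -/
def support (p : PCond θ) : Set Ordinal.{0} :=
  p.s ∪ ⋃₀ p.Z

lemma mk_support_le (p : PCond θ) : #p.support ≤ ℵ₁ := by
  have hℵ : ℵ₀ ≤ (ℵ₁ : Cardinal.{1}) := aleph0_le_aleph 1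
  have hZ : ⨆ z : p.Z, #z ≤ (ℵ₁ : Cardinal.{1}) := ciSup_le' fun z => (p.Z_sub z z.2).2
  calc #p.support
    _ ≤ #p.s + #p.Z * ⨆ z : p.Z, #z := (mk_union_le _ _).trans (by gcongr; exact mk_sUnion_le _)
    _ ≤ ℵ₁ + ℵ₁ * ℵ₁ := by
      gcongr
      exacts [p.s_fin.lt_aleph0.le.trans hℵ, p.Z_fin.lt_aleph0.le.trans hℵ]
    _ = ℵ₁ := by rw [mul_eq_self hℵ, add_eq_self hℵ]

variable {ι : Type u}

lemma exists_pairwise_inter_subset (hι : ℵ₁ < #ι) (p : ι → PCond θ) :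
    ∃ J : Set ι, ℵ₁ < #J ∧ ∃ k, J.Pairwise fun i j =>
      (p i).s ∩ (p j).s ⊆ (p k).s ∧ (p i).Z ∩ (p j).Z ⊆ (p k).Z := by
  have hℵ : ℵ₀ ≤ (ℵ₁ : Cardinal.{u}) := aleph0_le_aleph 1
  have hreg := isRegular_succ hℵ
  have hunc : ℵ₀ < Order.succ ℵ₁ := Order.lt_succ_of_le hℵ
  have huniv : Order.succ ℵ₁ ≤ #(Set.univ : Set ι) := Order.succ_le_of_lt (by rwa [mk_univ])
  obtain ⟨J₁, -, hJ₁, S, hS⟩ := exists_isDeltaSystem (A := fun i => (p i).s) hreg hunc huniv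
    fun i _ => (p i).s_fin
  obtain ⟨J, hJJ₁, hJ, T, hT⟩ := exists_isDeltaSystem (A := fun i => (p i).Z) hreg hunc hJ₁
    fun i _ => (p i).Z_fin
  replace hS := hS.mono hJJ₁
  replace hJ : ℵ₁ < #J := Order.succ_le_iff.1 hJ
  have hJnt : J.Nontrivial := by
    rw [← nontrivial_coe_sort, ← one_lt_iff_nontrivial]
    exact (one_lt_aleph0.trans_le hℵ).trans hJ
  obtain ⟨k, hk⟩ := hJnt.nonempty
  exact ⟨J, hJ, k, fun i hi j hj hij => ⟨(hS hi hj hij).subset.trans (hS.root_subset hJnt hk),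
    (hT hi hj hij).subset.trans (hT.root_subset hJnt hk)⟩⟩

lemma exists_coherent {p : ι → PCond θ} {J : Set ι} (hJ : ¬ J.Countable) (hS : S.Countable)
    (hT : T.Countable)
    (hST : J.Pairwise fun i j => (p i).s ∩ (p j).s ⊆ S ∧ (p i).Z ∩ (p j).Z ⊆ T) :
    ∃ i ∈ J, ∃ j ∈ J, i ≠ j ∧ Coherent (p i) (p j) := by
  obtain ⟨i, hi, j, hj, hij, htrace⟩ := exists_ne_map_eq_of_not_countable hJ
    ((countable_range_trace hS hT).mono (range_comp_subset_range p (trace S T)))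
  exact ⟨i, hi, j, hj, hij,
    coherent_of_trace_eq htrace (hST hi hj hij).1 (hST hi hj hij).2⟩

end PCond

theorem statement13_general {ι : Type u} {θ : Cardinal.{0}} (hι : ℵ₁ < #ι) (p : ι → PCond θ)
    (y : ι → Set Ordinal.{0}) (hdisj : Pairwise (Function.onFun Disjoint y))
    (hsub : ∀ i, y i ⊆ (p i).s) :
    ∃ i j, i ≠ j ∧ ∃ q : PCond θ, PLe θ q (p i) ∧ PLe θ q (p j) ∧
      ∃ n < q.n, (∀ ξ ∈ y i, (n, ξ) ∈ q.a) ∧ ∀ η ∈ y j, (n, η) ∈ q.b := by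
  obtain ⟨J, hJ, k, hk⟩ := PCond.exists_pairwise_inter_subset hι p
  have hB : lift.{u} #(p k).support ≤ lift.{1} ℵ₁ := by simpa using (p k).mk_support_le
  have hG : ℵ₁ < #{i ∈ J | Disjoint (y i) (p k).support} :=
    lt_mk_setOf_disjoint hdisj (aleph0_le_aleph 1) hJ hB
  have hGunc : ¬ {i ∈ J | Disjoint (y i) (p k).support}.Countable := fun hc =>
    hG.not_ge ((le_aleph0_iff_set_countable.2 hc).trans (aleph0_le_aleph 1))
  obtain ⟨i, ⟨hi, hyi⟩, j, ⟨hj, hyj⟩, hij, hcoh⟩ := PCond.exists_coherent hGunc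
    (p k).s_fin.countable (p k).Z_fin.countable (hk.mono (sep_subset _ _))
  obtain ⟨hs, hZ⟩ := hk hi hj hij
  rw [PCond.support, disjoint_union_right] at hyi hyj
  refine ⟨i, j, hij, hcoh.exists_common_extension ?_ ?_ ?_⟩
  · exact fun ξ hξ => ⟨hsub i hξ, fun hξj => disjoint_left.1 hyi.1 hξ (hs ⟨hsub i hξ, hξj⟩)⟩
  · exact fun η hη => ⟨hsub j hη, fun hηi => disjoint_left.1 hyj.1 hη (hs ⟨hηi, hsub j hη⟩)⟩
  · exact fun z hz => hyi.2.mono_right (subset_sUnion_of_mem (hZ hz))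

/-- given conditions `p_i ∈ 𝒫` (for `i < θ`) and pairwise disjoint
finite `y_i ⊆ s_{p_i}`, there are `i ≠ j` and a common extension `q` of `p_i, p_j`
and a level `n < n_q` with `⟨n,ξ⟩ ∈ a_q` for all `ξ ∈ y_i` and `⟨n,η⟩ ∈ b_q` for
all `η ∈ y_j`. -/
theorem statement13 (θ : Cardinal.{0}) (θseq : Ordinal.{0} → Cardinal.{0})
    (hκ : ℵ₀ < θ.ord.cof) (hsing : θ.ord.cof < θ)
    (hmono : ∀ α β : Ordinal, α < β → β < θ.ord.cof.ord → θseq α < θseq β)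
    (hsup : sSup (θseq '' Set.Iio θ.ord.cof.ord) = θ)
    (h0 : θ.ord.cof < θseq 0)
    (p : Ordinal.{0} → PCond θ)
    (y : Ordinal.{0} → Set Ordinal.{0})
    (hfam : DisjFinFam θ y)
    (hsub : ∀ i < θ.ord, y i ⊆ (p i).s) :
    ∃ i < θ.ord, ∃ j < θ.ord, i ≠ j ∧
      ∃ q : PCond θ, PLe θ q (p i) ∧ PLe θ q (p j) ∧
        ∃ n < q.n, (∀ ξ ∈ y i, (n, ξ) ∈ q.a) ∧ ∀ η ∈ y j, (n, η) ∈ q.b := by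
  have hℵ : ℵ₁ < θ := (succ_aleph0 ▸ Order.succ_le_of_lt hκ).trans_lt hsing
  obtain ⟨i, j, hij, h⟩ := statement13_general (ι := Iio θ.ord) (by simpa using hℵ) (p ·) (y ·)
    (fun i j hij => hfam.2 i i.2 j j.2 (Subtype.coe_ne_coe.2 hij)) fun i => hsub i i.2
  exact ⟨i, i.2, j, j.2, Subtype.coe_ne_coe.2 hij, h⟩
end
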